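/- Let (E₀,E₁), (F₀,F₁), (G₀,G₁) be Banach couples and let T be a bounded bilinear operator from (E₀+E₁)×(F₀+F₁) into G₀+G₁ whose restrictions T|_{E_k×F_k} are compact from E_k×F_k into G_k for k=0,1. Then for every function parameter ρ of class ℬ^{+−}, with γ(t) = 1/ρ̄(t⁻¹) and 1 ≤ p,q,r ≤ ∞ satisfying 1/r = 1/p + 1/q − 1, T is compact from (E₀,E₁)_{γ,p;J} × (F₀,F₁)_{ρ,q;J} into (G₀,G₁)_{ρ,r;J}. -/

import Mathlib

open Filter Set MeasureTheory ENNReal NNReal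

noncomputable section

/-! ### Function parameters -/

/-- `rbar ρ s = sup_{t>0} ρ(s t)/ρ(t)`. -/
def rbar (ρ : ℝ → ℝ) (s : ℝ) : ℝ := sSup {r : ℝ | ∃ t > 0, r = ρ (s * t) / ρ t}

/-- The class `ℬ` of function parameters. -/
structure IsClassB (ρ : ℝ → ℝ) : Prop where
  pos : ∀ t > 0, 0 < ρ t
  cont : ContinuousOn ρ (Set.Ioi 0)
  one : ρ 1 = 1
  bdd : ∀ s > 0, BddAbove {r : ℝ | ∃ t > 0, r = ρ (s * t) / ρ t}

/-- The class `ℬ^{+-}` of function parameters. -/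
structure IsClassBpm (ρ : ℝ → ℝ) extends IsClassB ρ : Prop where
  integ : MeasureTheory.IntegrableOn (fun t => min 1 t⁻¹ * rbar ρ t * t⁻¹) (Set.Ioi 0)

/-- Pseudo-concavity of a function parameter. -/
def IsPseudoConcave (ρ : ℝ → ℝ) : Prop :=
  ∃ C > 0, ∀ s > 0, ∀ t > 0, ρ t ≤ C * max 1 (t / s) * ρ s

/-! ### `ℓ^q` norms of two-sided sequences with values in `ℝ≥0∞` -/

/-- The `ℓ^q(ℤ)` norm of a sequence of extended reals. -/
def eLq (q : ℝ≥0∞) (a : ℤ → ℝ≥0∞) : ℝ≥0∞ :=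
  if q = ∞ then ⨆ n, a n else (∑' n, a n ^ q.toReal) ^ (1 / q.toReal)

/-! ### Extended-real-valued norms -/

/-- `N : V → ℝ≥0∞` is a complete (Banach) extended norm; its finiteness set is the
underlying Banach space. -/
structure IsENorm {V : Type*} [AddCommGroup V] [Module ℝ V] (N : V → ℝ≥0∞) : Prop where
  map_zero : N 0 = 0
  eq_zero : ∀ x, N x = 0 → x = 0
  add_le : ∀ x y, N (x + y) ≤ N x + N y
  smul : ∀ (c : ℝ) (x : V), N (c • x) = ENNReal.ofReal |c| * N x
  complete : ∀ u : ℕ → V, (∀ n, N (u n) ≠ ∞) →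
    (∀ ε : ℝ, 0 < ε → ∃ n₀ : ℕ, ∀ m ≥ n₀, ∀ n ≥ n₀, N (u m - u n) < ENNReal.ofReal ε) →
    ∃ x, N x ≠ ∞ ∧ Filter.Tendsto (fun n => N (u n - x)) Filter.atTop (nhds 0)

/-! ### Banach couples realized inside an ambient space -/

section Couple

variable {E₀ E₁ V : Type*} [NormedAddCommGroup E₀] [NormedSpace ℝ E₀]
  [NormedAddCommGroup E₁] [NormedSpace ℝ E₁] [AddCommGroup V] [Module ℝ V]

/-- The extended norm on the ambient space induced by the embedding of one Banach space:
`∞` outside the range of the embedding. -/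
def enormOf {E : Type*} [NormedAddCommGroup E] [NormedSpace ℝ E] (i : E →ₗ[ℝ] V) (x : V) : ℝ≥0∞ :=
  ⨅ (a : E) (_ : i a = x), (‖a‖₊ : ℝ≥0∞)

/-- The `K`-functional of the couple `(E₀, E₁)`. -/
def eKfun (i₀ : E₀ →ₗ[ℝ] V) (i₁ : E₁ →ₗ[ℝ] V) (t : ℝ) (x : V) : ℝ≥0∞ :=
  ⨅ (a : E₀) (b : E₁) (_ : x = i₀ a + i₁ b), ENNReal.ofReal (‖a‖ + t * ‖b‖)

/-- The extended norm of `E₀ + E₁`. -/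
def esumNorm (i₀ : E₀ →ₗ[ℝ] V) (i₁ : E₁ →ₗ[ℝ] V) (x : V) : ℝ≥0∞ := eKfun i₀ i₁ 1 x

/-- The extended norm of `E₀ ∩ E₁`. -/
def einterNorm (i₀ : E₀ →ₗ[ℝ] V) (i₁ : E₁ →ₗ[ℝ] V) (x : V) : ℝ≥0∞ :=
  max (enormOf i₀ x) (enormOf i₁ x)

/-- The extended norm of the interpolation space `(E₀,E₁)_{ρ,q;K}`. -/
def eKNorm (i₀ : E₀ →ₗ[ℝ] V) (i₁ : E₁ →ₗ[ℝ] V) (ρ : ℝ → ℝ) (q : ℝ≥0∞) (x : V) : ℝ≥0∞ :=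
  eLq q (fun n => eKfun i₀ i₁ ((2 : ℝ) ^ n) x / ENNReal.ofReal (ρ ((2 : ℝ) ^ n)))

/-- `(a, b)` is a `J`-representation of `x`: `u_n = a n = b n ∈ E₀ ∩ E₁` and
`x = ∑_{n ∈ ℤ} u_n` with convergence in `E₀ + E₁`. -/
def IsJRep (i₀ : E₀ →ₗ[ℝ] V) (i₁ : E₁ →ₗ[ℝ] V) (x : V) (a : ℤ → E₀) (b : ℤ → E₁) : Prop :=
  (∀ n, i₀ (a n) = i₁ (b n)) ∧
  ∀ ε : ℝ, 0 < ε → ∃ F : Finset ℤ, ∀ G : Finset ℤ, F ⊆ G →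
    esumNorm i₀ i₁ (x - ∑ n ∈ G, i₀ (a n)) < ENNReal.ofReal ε

/-- The extended norm of the interpolation space `(E₀,E₁)_{ρ,q;J}`. -/
def eJNorm (i₀ : E₀ →ₗ[ℝ] V) (i₁ : E₁ →ₗ[ℝ] V) (ρ : ℝ → ℝ) (q : ℝ≥0∞) (x : V) : ℝ≥0∞ :=
  ⨅ (a : ℤ → E₀) (b : ℤ → E₁) (_ : IsJRep i₀ i₁ x a b),
    eLq q (fun n => ENNReal.ofReal (max ‖a n‖ ((2 : ℝ) ^ n * ‖b n‖) / ρ ((2 : ℝ) ^ n)))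

/-- `(E₀, E₁)` is a Banach couple: both spaces are complete and continuously embedded
in the Hausdorff topological vector space `V`. -/
structure IsBanachCouple [TopologicalSpace V] (i₀ : E₀ →ₗ[ℝ] V) (i₁ : E₁ →ₗ[ℝ] V) : Prop where
  t2 : T2Space V
  contAdd : ContinuousAdd V
  contSMul : ContinuousSMul ℝ V
  complete₀ : CompleteSpace E₀
  complete₁ : CompleteSpace E₁
  inj₀ : Function.Injective i₀
  inj₁ : Function.Injective i₁
  cont₀ : Continuous i₀
  cont₁ : Continuous i₁

/-- `N` is (the extended norm of) an intermediate space for the couple `(E₀, E₁)`. -/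
def IsIntermediate (i₀ : E₀ →ₗ[ℝ] V) (i₁ : E₁ →ₗ[ℝ] V) (N : V → ℝ≥0∞) : Prop :=
  IsENorm N ∧
  (∃ C > 0, ∀ x : V, N x ≤ ENNReal.ofReal C * einterNorm i₀ i₁ x) ∧
  (∃ C > 0, ∀ x : V, esumNorm i₀ i₁ x ≤ ENNReal.ofReal C * N x)

/-- `N` is an intermediate space of class `J_ρ(E₀,E₁)`, i.e. `(E₀,E₁)_{ρ,1;J} ↪ N`. -/
def IsClassJ (i₀ : E₀ →ₗ[ℝ] V) (i₁ : E₁ →ₗ[ℝ] V) (ρ : ℝ → ℝ) (N : V → ℝ≥0∞) : Prop :=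
  IsIntermediate i₀ i₁ N ∧ ∃ C > 0, ∀ x : V, N x ≤ ENNReal.ofReal C * eJNorm i₀ i₁ ρ 1 x

/-- `N` is an intermediate space of class `K_ρ(E₀,E₁)`, i.e. `N ↪ (E₀,E₁)_{ρ,∞;K}`. -/
def IsClassK (i₀ : E₀ →ₗ[ℝ] V) (i₁ : E₁ →ₗ[ℝ] V) (ρ : ℝ → ℝ) (N : V → ℝ≥0∞) : Prop :=
  IsIntermediate i₀ i₁ N ∧ ∃ C > 0, ∀ x : V, eKNorm i₀ i₁ ρ ⊤ x ≤ ENNReal.ofReal C * N x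

end Couple

/-! ### The approximation hypothesis (AP) -/

/-- The couple with extended norms `N₀, N₁` satisfies the approximation hypothesis (AP). -/
def SatisfiesAP {V : Type*} [AddCommGroup V] [Module ℝ V] (N₀ N₁ : V → ℝ≥0∞) : Prop :=
  ∃ (P Pp Pm : ℕ → V →ₗ[ℝ] V) (C : ℝ≥0∞) (c : ℕ → ℝ≥0∞),
    0 < C ∧ C ≠ ∞ ∧ Filter.Tendsto c Filter.atTop (nhds 0) ∧
    (∀ (n : ℕ) (x y : V), N₀ x ≠ ∞ → N₁ y ≠ ∞ →
      (P n (x + y) + Pp n (x + y) + Pm n (x + y) = x + y ∧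
        N₀ (P n (x + y)) ≠ ∞ ∧ N₁ (P n (x + y)) ≠ ∞)) ∧
    (∀ n x, N₀ (P n x) ≤ C * N₀ x) ∧ (∀ n x, N₁ (P n x) ≤ C * N₁ x) ∧
    (∀ n x, N₀ (Pp n x) ≤ C * N₀ x) ∧ (∀ n x, N₁ (Pp n x) ≤ C * N₁ x) ∧
    (∀ n x, N₀ (Pm n x) ≤ C * N₀ x) ∧ (∀ n x, N₁ (Pm n x) ≤ C * N₁ x) ∧
    (∀ n x, N₀ x ≠ ∞ → N₁ (Pp n x) ≤ c n * N₀ x) ∧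
    (∀ n x, N₁ x ≠ ∞ → N₀ (Pm n x) ≤ c n * N₁ x)

/-! ### Bilinear operators -/

section Bilinear

variable {VE VF VG : Type*} [AddCommGroup VG]

/-- The norm of a bilinear operator between spaces given by extended norms. -/
def eBilNorm (NE : VE → ℝ≥0∞) (NF : VF → ℝ≥0∞) (NG : VG → ℝ≥0∞) (T : VE → VF → VG) : ℝ≥0∞ :=
  ⨆ (x : VE) (_ : NE x ≤ 1) (y : VF) (_ : NF y ≤ 1), NG (T x y)

/-- Boundedness of a bilinear operator between spaces given by extended norms. -/
def eBilBdd (NE : VE → ℝ≥0∞) (NF : VF → ℝ≥0∞) (NG : VG → ℝ≥0∞) (T : VE → VF → VG) : Prop :=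
  ∃ M : ℝ≥0, ∀ x y, NG (T x y) ≤ (M : ℝ≥0∞) * NE x * NF y

/-- Compactness of a bilinear operator: the image of the product of unit balls is
totally bounded in the target. -/
def eBilCompact (NE : VE → ℝ≥0∞) (NF : VF → ℝ≥0∞) (NG : VG → ℝ≥0∞) (T : VE → VF → VG) : Prop :=
  ∀ ε : ℝ, 0 < ε → ∃ D : Finset VG, ∀ x y, NE x ≤ 1 → NF y ≤ 1 →
    ∃ c ∈ D, NG (T x y - c) < ENNReal.ofReal ε

end Bilinear

/-! ### A generic K-functional for a couple given by two extended norms -/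

/-- Generic `K`-functional for a couple described by two extended norms on `W`. -/
def eKgen {W : Type*} [AddCommGroup W] (N₀ N₁ : W → ℝ≥0∞) (t : ℝ) (x : W) : ℝ≥0∞ :=
  ⨅ y : W, (N₀ (x - y) + ENNReal.ofReal t * N₁ y)

/-- The `(ρ,q;K)`-interpolation extended norm for a couple given by two extended norms. -/
def eKNormGen {W : Type*} [AddCommGroup W] (N₀ N₁ : W → ℝ≥0∞) (ρ : ℝ → ℝ) (q : ℝ≥0∞)
    (x : W) : ℝ≥0∞ :=
  eLq q (fun n => eKgen N₀ N₁ ((2 : ℝ) ^ n) x / ENNReal.ofReal (ρ ((2 : ℝ) ^ n)))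

/-! ### Lions and Persson approximation conditions -/

section LP

variable {E₀ E₁ V : Type*} [NormedAddCommGroup E₀] [NormedSpace ℝ E₀]
  [NormedAddCommGroup E₁] [NormedSpace ℝ E₁] [AddCommGroup V] [Module ℝ V]

/-- Lions' approximation condition for the couple `(E₀, E₁)`. -/
def LionsCondition (i₀ : E₀ →ₗ[ℝ] V) (i₁ : E₁ →ₗ[ℝ] V) : Prop :=
  ∃ P : ℕ → V →ₗ[ℝ] V,
    (∀ (n : ℕ) (a : E₀), einterNorm i₀ i₁ (P n (i₀ a)) ≠ ∞) ∧
    (∀ (n : ℕ) (b : E₁), einterNorm i₀ i₁ (P n (i₁ b)) ≠ ∞) ∧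
    (∀ a : E₀, Filter.Tendsto (fun n => enormOf i₀ (P n (i₀ a) - i₀ a)) Filter.atTop (nhds 0)) ∧
    (∀ b : E₁, Filter.Tendsto (fun n => enormOf i₁ (P n (i₁ b) - i₁ b)) Filter.atTop (nhds 0))

/-- Persson's approximation condition for the couple `(E₀, E₁)`. -/
def PerssonCondition (i₀ : E₀ →ₗ[ℝ] V) (i₁ : E₁ →ₗ[ℝ] V) : Prop :=
  ∀ K : Set E₀, IsCompact K →
    ∃ (C : ℝ) (P : Set (V →ₗ[ℝ] V)), 0 < C ∧
      (∀ p ∈ P,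
        (∀ a : E₀, einterNorm i₀ i₁ (p (i₀ a)) ≠ ∞ ∧
          enormOf i₀ (p (i₀ a)) ≤ ENNReal.ofReal (C * ‖a‖)) ∧
        (∀ b : E₁, einterNorm i₀ i₁ (p (i₁ b)) ≠ ∞ ∧
          enormOf i₁ (p (i₁ b)) ≤ ENNReal.ofReal (C * ‖b‖))) ∧
      (∀ ε > 0, ∃ p ∈ P, ∀ x ∈ K, enormOf i₀ (p (i₀ x) - i₀ x) < ENNReal.ofReal ε)

end LP

end

/-!
Write `x = ∑ u_k` and `y = ∑ v_m` for `J`-representations. Bounds `c₀`, `c₁` of `T` on the two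
endpoints give `K(2ⁿ, T(u_k, v_m)) ≤ min (c₀, c₁ 2^(n-k-m)) J(2ᵏ, u_k) J(2ᵐ, v_m)`. Since
`γ(2ᵏ) ρ(2ᵐ) ≤ ρ̄(2^(k+m-n)) ρ(2ⁿ)`, division by `ρ(2ⁿ)` turns this into a discrete convolution
of the two weighted `J`-sequences with a kernel which is summable because `ρ` is of class
`ℬ^{+-}`, and Young's inequality gives `‖T(x, y)‖_{ρ,r;K} ≤ C ‖x‖_{γ,p;J} ‖y‖_{ρ,q;J}`.

Compactness on an endpoint allows `c₀` to be replaced by an arbitrarily small constant as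
`n → -∞`, and `c₁` as `n → ∞`: the values `T(u, v)` with `u ∈ E₀ ∩ E₁` and `v ∈ F₀ ∩ F₁` in the
unit balls have finite nets consisting of elements `z` of `G₀ ∩ G₁`, for which
`K(2ⁿ, z) ≤ 2ⁿ ‖z‖_{G₁} → 0` as `n → -∞`, and symmetrically `2⁻ⁿ K(2ⁿ, z) ≤ 2⁻ⁿ ‖z‖_{G₀} → 0` as
`n → ∞`. So the two tails of the `K`-norm of `T(x, y)` are uniformly small. In `G₀ + G₁` the image
itself is totally bounded, as up to a small error `T(x, y)` is a sum of finitely many blocks in a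
multiple of the convex hull of `T(ball × ball)`. Hence the image is totally bounded in the
`K`-norm, and by the fundamental lemma in the `J`-norm.
-/

open scoped Topology

/-! ### Extended seminorms and total boundedness -/

/-- Extended seminorms on a real vector space, such as the `K`-functionals `K(t, ·)`. -/
structure IsESeminorm {V : Type*} [AddCommGroup V] [Module ℝ V] (N : V → ℝ≥0∞) : Prop where
  add_le : ∀ x y, N (x + y) ≤ N x + N y
  smul_le : ∀ (c : ℝ) x, N (c • x) ≤ ‖c‖ₑ * N x

/-- Total boundedness with respect to a size function `N`, so that compactness of a bilinear
operator is `ETotallyBounded` of the image of the unit balls. The centers need not lie in `S`. -/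
def ETotallyBounded {V : Type*} [AddCommGroup V] (N : V → ℝ≥0∞) (S : Set V) : Prop :=
  ∀ ε : ℝ≥0∞, ε ≠ 0 → ∃ D : Finset V, ∀ x ∈ S, ∃ c ∈ D, N (x - c) ≤ ε

namespace IsESeminorm

variable {V : Type*} [AddCommGroup V] [Module ℝ V] {N : V → ℝ≥0∞}

lemma map_zero (hN : IsESeminorm N) : N 0 = 0 := by simpa using hN.smul_le 0 0

lemma map_neg_le (hN : IsESeminorm N) (x : V) : N (-x) ≤ N x := by simpa using hN.smul_le (-1) x

lemma sub_le (hN : IsESeminorm N) (x y : V) : N (x - y) ≤ N x + N y := by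
  simpa only [sub_eq_add_neg] using (hN.add_le x (-y)).trans (by gcongr; exact hN.map_neg_le y)

lemma sub_comm_le (hN : IsESeminorm N) (x y : V) : N (x - y) ≤ N (y - x) := by
  simpa using hN.map_neg_le (y - x)

lemma le_sub_add (hN : IsESeminorm N) (x y : V) : N x ≤ N (x - y) + N y := by
  simpa using hN.add_le (x - y) y

lemma sub_le_add (hN : IsESeminorm N) (x y z : V) : N (x - z) ≤ N (x - y) + N (y - z) := by
  simpa using hN.add_le (x - y) (y - z)

lemma const_mul (hN : IsESeminorm N) (t : ℝ≥0∞) : IsESeminorm fun x => t * N x where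
  add_le x y := (mul_le_mul_right (hN.add_le x y) t).trans_eq (mul_add t _ _)
  smul_le c x := (mul_le_mul_right (hN.smul_le c x) t).trans_eq (mul_left_comm t _ _)

lemma sum_le (hN : IsESeminorm N) {ι : Type*} (s : Finset ι) (f : ι → V) :
    N (∑ i ∈ s, f i) ≤ ∑ i ∈ s, N (f i) :=
  Finset.le_sum_of_subadditive N hN.map_zero.le hN.add_le s f

lemma convex_thickening (hN : IsESeminorm N) {C : Set V} (hC : Convex ℝ C) (ε : ℝ≥0∞) :
    Convex ℝ {x | ∃ y ∈ C, N (x - y) ≤ ε} := by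
  rintro x ⟨x', hx', hx⟩ y ⟨y', hy', hy⟩ s t hs ht hst
  refine ⟨s • x' + t • y', hC hx' hy' hs ht hst, ?_⟩
  calc N (s • x + t • y - (s • x' + t • y'))
      = N (s • (x - x') + t • (y - y')) := by congr 1; module
    _ ≤ ‖s‖ₑ * N (x - x') + ‖t‖ₑ * N (y - y') :=
        (hN.add_le _ _).trans (add_le_add (hN.smul_le _ _) (hN.smul_le _ _))
    _ ≤ (‖s‖ₑ + ‖t‖ₑ) * ε := by rw [add_mul]; gcongr
    _ = ε := by
        rw [Real.enorm_of_nonneg hs, Real.enorm_of_nonneg ht, ← ENNReal.ofReal_add hs ht, hst,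
          ENNReal.ofReal_one, one_mul]

end IsESeminorm

namespace ETotallyBounded

variable {V : Type*} [AddCommGroup V] {N : V → ℝ≥0∞} {S : Set V}

lemma mono {S' : Set V} (hS : ETotallyBounded N S') (h : S ⊆ S') : ETotallyBounded N S :=
  fun ε hε => (hS ε hε).imp fun _ hD x hx => hD x (h hx)

lemma of_le_mul {N' : V → ℝ≥0∞} {C : ℝ≥0∞} (hS : ETotallyBounded N S) (hC : C ≠ ∞)
    (h : ∀ x, N' x ≤ C * N x) : ETotallyBounded N' S := by
  intro ε hε
  obtain ⟨D, hD⟩ := hS (ε / C) (ENNReal.div_ne_zero.2 ⟨hε, hC⟩)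
  refine ⟨D, fun x hx => ?_⟩
  obtain ⟨c, hc, hxc⟩ := hD x hx
  exact ⟨c, hc, (h _).trans ((mul_le_mul_right hxc C).trans ENNReal.mul_div_le)⟩

variable [Module ℝ V]

lemma exists_finset_subset (hN : IsESeminorm N) (hS : ETotallyBounded N S) {ε : ℝ≥0∞}
    (hε : ε ≠ 0) : ∃ D : Finset V, ↑D ⊆ S ∧ ∀ x ∈ S, ∃ c ∈ D, N (x - c) ≤ ε := by
  classical
  obtain ⟨D, hD⟩ := hS (ε / 2) (ENNReal.div_ne_zero.2 ⟨hε, by simp⟩)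
  have hpick : ∀ c : V, ∃ s : Finset V, ↑s ⊆ S ∧ ∀ x ∈ S, N (x - c) ≤ ε / 2 →
      ∃ y ∈ s, N (y - c) ≤ ε / 2 := fun c => by
    by_cases h : ∃ y ∈ S, N (y - c) ≤ ε / 2
    · obtain ⟨y, hy, hyc⟩ := h
      exact ⟨{y}, by simpa using hy, fun _ _ _ => ⟨y, by simp, hyc⟩⟩
    · exact ⟨∅, by simp, fun x hx hxc => (h ⟨x, hx, hxc⟩).elim⟩
  choose pick hpick_sub hpick_near using hpick
  refine ⟨D.biUnion pick, by simpa using fun c _ => hpick_sub c, fun x hx => ?_⟩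
  obtain ⟨c, hc, hxc⟩ := hD x hx
  obtain ⟨y, hy, hyc⟩ := hpick_near c x hx hxc
  refine ⟨y, Finset.mem_biUnion.2 ⟨c, hc, hy⟩, (hN.sub_le_add x c y).trans ?_⟩
  exact (add_le_add hxc ((hN.sub_comm_le c y).trans hyc)).trans_eq (ENNReal.add_halves ε)

lemma of_approx (hN : IsESeminorm N)
    (h : ∀ ε : ℝ≥0∞, ε ≠ 0 → ∃ S', ETotallyBounded N S' ∧ ∀ x ∈ S, ∃ y ∈ S', N (x - y) ≤ ε) :
    ETotallyBounded N S := by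
  intro ε hε
  have hε2 : ε / 2 ≠ 0 := ENNReal.div_ne_zero.2 ⟨hε, by simp⟩
  obtain ⟨S', hS', happrox⟩ := h (ε / 2) hε2
  obtain ⟨D, hD⟩ := hS' (ε / 2) hε2
  refine ⟨D, fun x hx => ?_⟩
  obtain ⟨y, hy, hxy⟩ := happrox x hx
  obtain ⟨c, hc, hyc⟩ := hD y hy
  exact ⟨c, hc, (hN.sub_le_add x y c).trans ((add_le_add hxy hyc).trans_eq (ENNReal.add_halves ε))⟩

lemma smul (hN : IsESeminorm N) (hS : ETotallyBounded N S) (c : ℝ) :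
    ETotallyBounded N ((c • ·) '' S) := by
  classical
  intro ε hε
  obtain ⟨D, hD⟩ := hS (ε / ‖c‖ₑ) (ENNReal.div_ne_zero.2 ⟨hε, enorm_ne_top⟩)
  refine ⟨D.image (c • ·), ?_⟩
  rintro _ ⟨x, hx, rfl⟩
  obtain ⟨d, hd, hxd⟩ := hD x hx
  refine ⟨c • d, Finset.mem_image_of_mem _ hd, ?_⟩
  change N (c • x - c • d) ≤ ε
  rw [← smul_sub]
  exact (hN.smul_le c _).trans ((mul_le_mul_right hxd _).trans ENNReal.mul_div_le)

lemma image_linear_combination (hN : IsESeminorm N) {ι : Type*} [Fintype ι] {c : ι → V}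
    (hc : ∀ j, N (c j) ≠ ∞) {s : Set (ι → ℝ)} (hs : TotallyBounded s) :
    ETotallyBounded N ((fun w => ∑ j, w j • c j) '' s) := by
  classical
  intro ε hε
  set C : ℝ≥0∞ := ∑ j, N (c j)
  have hC : C ≠ ∞ := ENNReal.sum_ne_top.2 fun j _ => hc j
  have hδ : ε / C ≠ 0 := ENNReal.div_ne_zero.2 ⟨hε, hC⟩
  obtain ⟨t, ht, hst⟩ := EMetric.totallyBounded_iff.1 hs (ε / C) (pos_iff_ne_zero.2 hδ)
  refine ⟨ht.toFinset.image fun w => ∑ j, w j • c j, ?_⟩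
  rintro _ ⟨w, hw, rfl⟩
  obtain ⟨v, hv, hwv⟩ := mem_iUnion₂.1 (hst hw)
  refine ⟨_, Finset.mem_image_of_mem _ (ht.mem_toFinset.2 hv), ?_⟩
  have hcoord : ∀ j, ‖w j - v j‖ₑ ≤ ε / C := fun j => by
    rw [← edist_eq_enorm_sub]
    exact (edist_le_pi_edist w v j).trans (le_of_lt hwv)
  calc N (∑ j, w j • c j - ∑ j, v j • c j) = N (∑ j, (w j - v j) • c j) := by
        rw [← Finset.sum_sub_distrib]; simp_rw [sub_smul]
    _ ≤ ∑ j, ε / C * N (c j) := (hN.sum_le _ _).trans <| Finset.sum_le_sum fun j _ =>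
        (hN.smul_le _ _).trans (mul_le_mul_left (hcoord j) _)
    _ = ε / C * C := by rw [Finset.mul_sum]
    _ ≤ ε := by rw [mul_comm]; exact ENNReal.mul_div_le

lemma convexHull_finset (hN : IsESeminorm N) {D : Finset V} (hD : ∀ c ∈ D, N c ≠ ∞) :
    ETotallyBounded N (convexHull ℝ (D : Set V)) := by
  refine (image_linear_combination hN (c := fun j : D => (j : V)) (fun j => hD j j.2)
    (isCompact_stdSimplex ℝ D).totallyBounded).mono fun x hx => ?_
  obtain ⟨w, hw0, hw1, rfl⟩ := Finset.mem_convexHull'.1 hx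
  refine ⟨fun j => w j, ⟨fun j => hw0 j j.2, ?_⟩, D.sum_coe_sort fun c => w c • c⟩
  rw [← hw1, ← D.sum_coe_sort]

protected lemma convexHull (hN : IsESeminorm N) (hS : ETotallyBounded N S)
    (hfin : ∀ x ∈ S, N x ≠ ∞) : ETotallyBounded N (convexHull ℝ S) := by
  refine of_approx hN fun ε hε => ?_
  obtain ⟨D, hDS, hD⟩ := hS.exists_finset_subset hN hε
  refine ⟨_, convexHull_finset hN fun c hc => hfin c (hDS hc), ?_⟩
  refine convexHull_min (fun x hx => ?_) (hN.convex_thickening (convex_convexHull ℝ _) ε)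
  obtain ⟨c, hc, hxc⟩ := hD x hx
  exact ⟨c, subset_convexHull ℝ _ hc, hxc⟩

lemma eventually_le (hN : IsESeminorm N) (hS : ETotallyBounded N S) {ι : Type*} {l : Filter ι}
    {K : ι → V → ℝ≥0∞} (hK : ∀ n, IsESeminorm (K n)) (hKN : ∀ n x, K n x ≤ N x)
    (hlim : ∀ x ∈ S, Tendsto (K · x) l (𝓝 0)) {ε : ℝ≥0∞} (hε : ε ≠ 0) :
    ∀ᶠ n in l, ∀ x ∈ S, K n x ≤ ε := by
  have hε2 : ε / 2 ≠ 0 := ENNReal.div_ne_zero.2 ⟨hε, by simp⟩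
  obtain ⟨D, hDS, hD⟩ := hS.exists_finset_subset hN hε2
  have hcenters : ∀ᶠ n in l, ∀ c ∈ D, K n c ≤ ε / 2 := (eventually_all_finset D).2 fun c hc =>
    (hlim c (hDS hc)).eventually_le_const (pos_iff_ne_zero.2 hε2)
  filter_upwards [hcenters] with n hn x hx
  obtain ⟨c, hc, hxc⟩ := hD x hx
  calc K n x ≤ K n (x - c) + K n c := (hK n).le_sub_add x c
    _ ≤ ε / 2 + ε / 2 := add_le_add ((hKN n _).trans hxc) (hn c hc)
    _ = ε := ENNReal.add_halves ε

end ETotallyBounded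

lemma sum_smul_mem_smul_convexHull {V : Type*} [AddCommGroup V] [Module ℝ V] {S : Set V}
    (h0 : (0 : V) ∈ S) {κ : Type*} (P : Finset κ) {w : κ → ℝ} {z : κ → V} {L : ℝ}
    (hw : ∀ p ∈ P, 0 ≤ w p) (hz : ∀ p ∈ P, z p ∈ S) (hP : ∑ p ∈ P, w p ≤ L) (hL : 0 < L) :
    ∑ p ∈ P, w p • z p ∈ (L • ·) '' convexHull ℝ S := by
  refine ⟨L⁻¹ • ∑ p ∈ P, w p • z p, ?_, smul_inv_smul₀ hL.ne' _⟩
  rcases (Finset.sum_nonneg hw).eq_or_lt' with hzero | hpos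
  · rw [Finset.sum_eq_zero fun p hp => by
      rw [(Finset.sum_eq_zero_iff_of_nonneg hw).1 hzero p hp, zero_smul], smul_zero]
    exact subset_convexHull ℝ S h0
  · have hmass := P.centerMass_mem_convexHull hw hpos hz
    have hscale : L⁻¹ • ∑ p ∈ P, w p • z p = (L⁻¹ * ∑ p ∈ P, w p) • P.centerMass w z := by
      rw [Finset.centerMass, smul_smul, mul_assoc, mul_inv_cancel₀ hpos.ne', mul_one]
    rw [hscale]
    refine (convex_convexHull ℝ S).smul_mem_of_zero_mem (subset_convexHull ℝ S h0) hmass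
      ⟨by positivity, ?_⟩
    rwa [inv_mul_le_one₀ hL]

lemma eBilCompact_iff {VE VF VG : Type*} [AddCommGroup VG] {NE : VE → ℝ≥0∞}
    {NF : VF → ℝ≥0∞} {NG : VG → ℝ≥0∞} {T : VE → VF → VG} :
    eBilCompact NE NF NG T ↔ ETotallyBounded NG (image2 T {x | NE x ≤ 1} {y | NF y ≤ 1}) := by
  constructor
  · intro h ε hε
    obtain ⟨δ, -, hδ, hδε⟩ := ENNReal.lt_iff_exists_real_btwn.1 (pos_iff_ne_zero.2 hε)
    obtain ⟨D, hD⟩ := h δ (ENNReal.ofReal_pos.1 hδ)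
    refine ⟨D, ?_⟩
    rintro _ ⟨x, hx, y, hy, rfl⟩
    obtain ⟨c, hc, hTc⟩ := hD x y hx hy
    exact ⟨c, hc, (hTc.trans hδε).le⟩
  · intro h ε hε
    obtain ⟨D, hD⟩ := h (ENNReal.ofReal (ε / 2)) (ENNReal.ofReal_pos.2 (half_pos hε)).ne'
    refine ⟨D, fun x y hx hy => ?_⟩
    obtain ⟨c, hc, hTc⟩ := hD _ (mem_image2_of_mem hx hy)
    exact ⟨c, hc, hTc.trans_lt ((ENNReal.ofReal_lt_ofReal_iff hε).2 (half_lt_self hε))⟩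

/-! ### Sequence spaces and Young's inequality -/

lemma eLq_top (a : ℤ → ℝ≥0∞) : eLq ∞ a = ⨆ n, a n := if_pos rfl

lemma eLq_of_ne_top {q : ℝ≥0∞} (hq : q ≠ ∞) (a : ℤ → ℝ≥0∞) :
    eLq q a = (∑' n, a n ^ q.toReal) ^ (1 / q.toReal) := if_neg hq

lemma eLq_one (a : ℤ → ℝ≥0∞) : eLq 1 a = ∑' n, a n := by simp [eLq]

lemma one_le_toReal {q : ℝ≥0∞} (hq : 1 ≤ q) (h : q ≠ ∞) : 1 ≤ q.toReal := by
  simpa using ENNReal.toReal_mono h hq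

lemma eLq_mono (q : ℝ≥0∞) {a b : ℤ → ℝ≥0∞} (h : ∀ n, a n ≤ b n) : eLq q a ≤ eLq q b := by
  unfold eLq
  split_ifs
  · exact iSup_mono h
  · gcongr
    exact h _

lemma le_eLq {q : ℝ≥0∞} (hq : 1 ≤ q) (a : ℤ → ℝ≥0∞) (n : ℤ) : a n ≤ eLq q a := by
  by_cases h : q = ∞
  · rw [h, eLq_top]
    exact le_iSup a n
  · have hq' := one_le_toReal hq h
    rw [eLq_of_ne_top h, one_div, ENNReal.le_rpow_inv_iff (by positivity)]
    exact ENNReal.le_tsum (f := fun n => a n ^ q.toReal) n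

lemma eLq_add_le {q : ℝ≥0∞} (hq : 1 ≤ q) (a b : ℤ → ℝ≥0∞) :
    eLq q (fun n => a n + b n) ≤ eLq q a + eLq q b := by
  by_cases h : q = ∞
  · simp only [h, eLq_top]
    exact iSup_le fun n => add_le_add (le_iSup a n) (le_iSup b n)
  · simp only [eLq_of_ne_top h]
    simpa only [lintegral_count, Pi.add_apply] using
      ENNReal.lintegral_Lp_add_le (μ := Measure.count) (f := a) (g := b)
        Measurable.of_discrete.aemeasurable Measurable.of_discrete.aemeasurable (one_le_toReal hq h)

lemma eLq_const_mul {q : ℝ≥0∞} (hq : 1 ≤ q) (c : ℝ≥0∞) (a : ℤ → ℝ≥0∞) :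
    eLq q (fun n => c * a n) = c * eLq q a := by
  by_cases h : q = ∞
  · simp only [h, eLq_top, ENNReal.mul_iSup]
  · have hq' := one_le_toReal hq h
    simp only [eLq_of_ne_top h, ENNReal.mul_rpow_of_nonneg _ _ ENNReal.toReal_nonneg]
    rw [ENNReal.tsum_mul_left, ENNReal.mul_rpow_of_nonneg _ _ (by positivity), ← ENNReal.rpow_mul,
      mul_one_div_cancel (by positivity), ENNReal.rpow_one]

lemma eLq_comp_equiv (q : ℝ≥0∞) (e : ℤ ≃ ℤ) (a : ℤ → ℝ≥0∞) :
    eLq q (fun n => a (e n)) = eLq q a := by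
  simp only [eLq, e.surjective.iSup_comp, e.tsum_eq fun n => a n ^ q.toReal]

lemma eLq_le_tsum {q : ℝ≥0∞} (hq : 1 ≤ q) (a : ℤ → ℝ≥0∞) : eLq q a ≤ ∑' n, a n := by
  by_cases h : q = ∞
  · rw [h, eLq_top]
    exact iSup_le fun n => ENNReal.le_tsum n
  · have hq' := one_le_toReal hq h
    have hsplit : ∀ x : ℝ≥0∞, x ^ q.toReal = x * x ^ (q.toReal - 1) := fun x => by
      simpa using ENNReal.rpow_add_of_nonneg (x := x) 1 (q.toReal - 1) zero_le_one (by linarith)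
    rw [eLq_of_ne_top h, one_div, ENNReal.rpow_inv_le_iff (by positivity), hsplit,
      ← ENNReal.tsum_mul_right]
    refine ENNReal.tsum_le_tsum fun n => ?_
    rw [hsplit]
    gcongr
    exact ENNReal.le_tsum n

lemma eLq_indicator_finset_le {q : ℝ≥0∞} (hq : 1 ≤ q) (I : Finset ℤ) (a : ℤ → ℝ≥0∞) :
    eLq q (indicator ↑I a) ≤ ∑ n ∈ I, a n :=
  (eLq_le_tsum hq _).trans_eq <| by
    rw [← tsum_subtype]
    exact I.tsum_subtype a

/-- Convolution of nonnegative two-sided sequences. -/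
noncomputable def eConv (a b : ℤ → ℝ≥0∞) (j : ℤ) : ℝ≥0∞ := ∑' k, a k * b (j - k)

lemma eConv_comm (a b : ℤ → ℝ≥0∞) : eConv a b = eConv b a := by
  funext j
  simpa [eConv, mul_comm] using ((Equiv.subLeft j).tsum_eq fun k => a k * b (j - k)).symm

lemma tsum_eConv (a b : ℤ → ℝ≥0∞) : ∑' j, eConv a b j = (∑' k, a k) * ∑' k, b k := by
  have hshift : ∀ k, ∑' j, b (j - k) = ∑' j, b j := fun k => (Equiv.subRight k).tsum_eq b
  simp only [eConv]
  rw [ENNReal.tsum_comm]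
  simp only [ENNReal.tsum_mul_left, hshift, ENNReal.tsum_mul_right]

lemma tsum_tsum_add_mul (f a b : ℤ → ℝ≥0∞) :
    ∑' k, ∑' m, f (k + m) * (a k * b m) = ∑' j, f j * eConv a b j := by
  simp only [eConv, ← ENNReal.tsum_mul_left]
  rw [ENNReal.tsum_comm (f := fun j k => f j * (a k * b (j - k)))]
  refine tsum_congr fun k => ?_
  simpa using (Equiv.addLeft k).tsum_eq fun j => f j * (a k * b (j - k))

lemma rpow_mul_rpow_one_div_sub {p s : ℝ} (hp : 0 < p) (hs : 0 ≤ s) (hsp : s ≤ 1 / p) (x : ℝ≥0∞) :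
    (x ^ p) ^ s * (x ^ p) ^ (1 / p - s) = x := by
  rw [← ENNReal.rpow_add_of_nonneg _ _ hs (sub_nonneg.2 hsp), ← ENNReal.rpow_mul,
    add_sub_cancel, mul_one_div_cancel hp.ne', ENNReal.rpow_one]

/-- Hölder's inequality with the three exponents `1 / s`, `1 / (1 / p - s)`, `1 / (1 / q - s)`,
applied to `a b = (a ^ p b ^ q) ^ s (a ^ p) ^ (1 / p - s) (b ^ q) ^ (1 / q - s)`. -/
lemma eConv_le_rpow_mul {p q s : ℝ} (hp : 1 ≤ p) (hq : 1 ≤ q) (hs : 0 ≤ s)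
    (h : s + 1 = 1 / p + 1 / q) (a b : ℤ → ℝ≥0∞) (j : ℤ) :
    eConv a b j ≤ eConv (fun k => a k ^ p) (fun k => b k ^ q) j ^ s *
      ((∑' k, a k ^ p) ^ (1 / p - s) * (∑' k, b k ^ q) ^ (1 / q - s)) := by
  have hp0 : 0 < p := by linarith
  have hq0 : 0 < q := by linarith
  have hsp : s ≤ 1 / p := by linarith [(div_le_one hq0).2 hq]
  have hsq : s ≤ 1 / q := by linarith [(div_le_one hp0).2 hp]
  let f : Fin 3 → ℤ → ℝ≥0∞ :=
    ![fun k => a k ^ p * b (j - k) ^ q, fun k => a k ^ p, fun k => b (j - k) ^ q]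
  let w : Fin 3 → ℝ := ![s, 1 / p - s, 1 / q - s]
  have hwsum : ∑ i, w i = 1 := by
    simp only [Fin.sum_univ_three, w, Matrix.cons_val]
    linarith
  have hwnonneg : ∀ i ∈ Finset.univ, 0 ≤ w i := fun i _ => by
    fin_cases i <;> simp only [w, Matrix.cons_val, Fin.reduceFinMk, Fin.zero_eta, Fin.mk_one]
    exacts [hs, sub_nonneg.2 hsp, sub_nonneg.2 hsq]
  have hfactor : ∀ k, a k * b (j - k) = ∏ i, f i k ^ w i := fun k => by
    simp only [Fin.prod_univ_three, f, w, Matrix.cons_val, ENNReal.mul_rpow_of_nonneg _ _ hs]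
    conv_lhs => rw [← rpow_mul_rpow_one_div_sub hp0 hs hsp (a k),
      ← rpow_mul_rpow_one_div_sub hq0 hs hsq (b (j - k))]
    ring
  have hshift : ∑' k, b (j - k) ^ q = ∑' k, b k ^ q := (Equiv.subLeft j).tsum_eq fun k => b k ^ q
  calc eConv a b j = ∫⁻ k, ∏ i, f i k ^ w i ∂Measure.count := by
        simp only [eConv, hfactor, lintegral_count]
    _ ≤ ∏ i, (∫⁻ k, f i k ∂Measure.count) ^ w i :=
        ENNReal.lintegral_prod_norm_pow_le _ (fun i _ => Measurable.of_discrete.aemeasurable)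
          hwsum hwnonneg
    _ = _ := by
        simp only [Fin.prod_univ_three, f, w, Matrix.cons_val, lintegral_count, hshift, eConv,
          mul_assoc]

lemma tsum_eConv_rpow_le {p q r : ℝ} (hp : 1 ≤ p) (hq : 1 ≤ q) (hr : 0 < r)
    (h : 1 / r + 1 = 1 / p + 1 / q) (a b : ℤ → ℝ≥0∞) :
    ∑' j, eConv a b j ^ r ≤ ((∑' k, a k ^ p) ^ (1 / p) * (∑' k, b k ^ q) ^ (1 / q)) ^ r := by
  have hrp : 1 / r ≤ 1 / p := by linarith [(div_le_one (by linarith)).2 hq]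
  have hrq : 1 / r ≤ 1 / q := by linarith [(div_le_one (by linarith)).2 hp]
  set A := ∑' k, a k ^ p
  set B := ∑' k, b k ^ q
  have hpointwise : ∀ j, eConv a b j ^ r ≤ eConv (fun k => a k ^ p) (fun k => b k ^ q) j *
      (A ^ (1 / p - 1 / r) * B ^ (1 / q - 1 / r)) ^ r := fun j => by
    refine (ENNReal.rpow_le_rpow
      (eConv_le_rpow_mul hp hq (by positivity) h a b j) hr.le).trans_eq ?_
    rw [ENNReal.mul_rpow_of_nonneg _ _ hr.le, ← ENNReal.rpow_mul, one_div_mul_cancel hr.ne',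
      ENNReal.rpow_one]
  have hexp : ∀ (X : ℝ≥0∞) (t : ℝ), 1 / r ≤ t → X * (X ^ (t - 1 / r)) ^ r = (X ^ t) ^ r := by
    intro X t ht
    have hX : X = (X ^ (1 / r)) ^ r := by
      rw [← ENNReal.rpow_mul, one_div_mul_cancel hr.ne', ENNReal.rpow_one]
    conv_lhs => enter [1]; rw [hX]
    rw [← ENNReal.mul_rpow_of_nonneg _ _ hr.le, ← ENNReal.rpow_add_of_nonneg _ _ (by positivity)
      (sub_nonneg.2 ht), add_sub_cancel]
  calc ∑' j, eConv a b j ^ r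
      ≤ A * B * (A ^ (1 / p - 1 / r) * B ^ (1 / q - 1 / r)) ^ r := by
        refine (ENNReal.tsum_le_tsum hpointwise).trans_eq ?_
        rw [ENNReal.tsum_mul_right, tsum_eConv]
    _ = A * (A ^ (1 / p - 1 / r)) ^ r * (B * (B ^ (1 / q - 1 / r)) ^ r) := by
        rw [ENNReal.mul_rpow_of_nonneg _ _ hr.le]; ring
    _ = (A ^ (1 / p) * B ^ (1 / q)) ^ r := by
        rw [hexp A _ hrp, hexp B _ hrq, ENNReal.mul_rpow_of_nonneg _ _ hr.le]

lemma eLq_top_eConv_le (a b : ℤ → ℝ≥0∞) : eLq ∞ (eConv a b) ≤ eLq ∞ a * eLq 1 b := by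
  rw [eLq_top, eLq_top, eLq_one]
  refine iSup_le fun j => ?_
  rw [← (Equiv.subLeft j).tsum_eq b, ← ENNReal.tsum_mul_left]
  exact ENNReal.tsum_le_tsum fun k => mul_le_mul_left (le_iSup a k) _

lemma eq_one_and_eq_top_of_inv_add_one {q r : ℝ≥0∞} (hq : 1 ≤ q) (h : r⁻¹ + 1 = q⁻¹) :
    q = 1 ∧ r = ∞ := by
  have hq1 : q⁻¹ = 1 := le_antisymm (ENNReal.inv_le_one.2 hq) (h ▸ le_add_self)
  have hr0 : r⁻¹ + 1 = 0 + 1 := by rw [h, hq1, zero_add]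
  exact ⟨ENNReal.inv_eq_one.1 hq1,
    ENNReal.inv_eq_zero.1 ((ENNReal.add_left_inj ENNReal.one_ne_top).1 hr0)⟩

lemma eLq_eConv_le {p q r : ℝ≥0∞} (hp : 1 ≤ p) (hq : 1 ≤ q) (hr : 1 ≤ r)
    (h : 1 / r + 1 = 1 / p + 1 / q) (a b : ℤ → ℝ≥0∞) :
    eLq r (eConv a b) ≤ eLq p a * eLq q b := by
  simp only [one_div] at h
  rcases eq_or_ne p ∞ with rfl | hpt
  · obtain ⟨rfl, rfl⟩ := eq_one_and_eq_top_of_inv_add_one hq (by simpa using h)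
    exact eLq_top_eConv_le a b
  rcases eq_or_ne q ∞ with rfl | hqt
  · obtain ⟨rfl, rfl⟩ := eq_one_and_eq_top_of_inv_add_one hp (by simpa using h)
    rw [eConv_comm, mul_comm]
    exact eLq_top_eConv_le b a
  have hinv : ∀ {x : ℝ≥0∞}, 1 ≤ x → x⁻¹ ≠ ∞ := fun hx =>
    ENNReal.inv_ne_top.2 (one_pos.trans_le hx).ne'
  have hreal : 1 / r.toReal + 1 = 1 / p.toReal + 1 / q.toReal := by
    have := congrArg ENNReal.toReal h
    rw [ENNReal.toReal_add (hinv hr) one_ne_top, ENNReal.toReal_add (hinv hp) (hinv hq)] at this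
    simpa [ENNReal.toReal_inv] using this
  have hp' := one_le_toReal hp hpt
  have hq' := one_le_toReal hq hqt
  rw [eLq_of_ne_top hpt, eLq_of_ne_top hqt]
  rcases eq_or_ne r ∞ with rfl | hrt
  · rw [eLq_top]
    refine iSup_le fun j => ?_
    simpa using eConv_le_rpow_mul hp' hq' le_rfl (by simpa using hreal) a b j
  · have hr' := one_le_toReal hr hrt
    rw [eLq_of_ne_top hrt, one_div r.toReal, ENNReal.rpow_inv_le_iff (by positivity)]
    exact tsum_eConv_rpow_le hp' hq' (by positivity) hreal a b

lemma eLq_eConv_le_tsum_mul {r : ℝ≥0∞} (hr : 1 ≤ r) (a b : ℤ → ℝ≥0∞) :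
    eLq r (eConv a b) ≤ (∑' k, a k) * eLq r b := by
  rw [← eLq_one]
  exact eLq_eConv_le le_rfl hr hr (by simp [add_comm]) a b

/-! ### Function parameters -/

namespace IsClassB

variable {ρ : ℝ → ℝ}

lemma rbar_pos (hρ : IsClassB ρ) {s : ℝ} (hs : 0 < s) : 0 < rbar ρ s :=
  (div_pos (hρ.pos _ (mul_pos hs one_pos)) (hρ.pos _ one_pos)).trans_le
    (le_csSup (hρ.bdd s hs) ⟨1, one_pos, rfl⟩)

lemma apply_mul_le (hρ : IsClassB ρ) {s t : ℝ} (hs : 0 < s) (ht : 0 < t) :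
    ρ (s * t) ≤ rbar ρ s * ρ t :=
  (div_le_iff₀ (hρ.pos t ht)).1 (le_csSup (hρ.bdd s hs) ⟨t, ht, rfl⟩)

lemma inv_apply_le (hρ : IsClassB ρ) {s t : ℝ} (hs : 0 < s) (ht : 0 < t) :
    (ρ t)⁻¹ ≤ rbar ρ s * (ρ (s * t))⁻¹ := by
  rw [← div_eq_mul_inv, le_div_iff₀ (hρ.pos _ (mul_pos hs ht)), inv_mul_le_iff₀ (hρ.pos t ht),
    mul_comm (ρ t)]
  exact hρ.apply_mul_le hs ht

lemma rbar_le (hρ : IsClassB ρ) {s C : ℝ} (h : ∀ t > 0, ρ (s * t) ≤ C * ρ t) : rbar ρ s ≤ C := by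
  refine csSup_le ⟨_, 1, one_pos, rfl⟩ ?_
  rintro _ ⟨t, ht, rfl⟩
  exact (div_le_iff₀ (hρ.pos t ht)).2 (h t ht)

lemma rbar_mul_le (hρ : IsClassB ρ) {s t : ℝ} (hs : 0 < s) (ht : 0 < t) :
    rbar ρ (s * t) ≤ rbar ρ s * rbar ρ t := by
  refine hρ.rbar_le fun u hu => ?_
  rw [mul_assoc, mul_assoc]
  exact (hρ.apply_mul_le hs (mul_pos ht hu)).trans
    (mul_le_mul_of_nonneg_left (hρ.apply_mul_le ht hu) (hρ.rbar_pos hs).le)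

lemma inv_rbar_inv_mul_le (hρ : IsClassB ρ) {s t u : ℝ} (hs : 0 < s) (ht : 0 < t) (hu : 0 < u) :
    (rbar ρ s⁻¹)⁻¹ * ρ t ≤ rbar ρ (s * t / u) * ρ u := by
  rw [inv_mul_le_iff₀ (hρ.rbar_pos (inv_pos.2 hs))]
  calc ρ t = ρ (s⁻¹ * (s * t / u * u)) := by congr 1; field_simp
    _ ≤ rbar ρ s⁻¹ * (rbar ρ (s * t / u) * ρ u) :=
      (hρ.apply_mul_le (by positivity) (by positivity)).trans <|
        mul_le_mul_of_nonneg_left (hρ.apply_mul_le (by positivity) hu)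
          (hρ.rbar_pos (inv_pos.2 hs)).le

/-- Baire's theorem, applied to the closed sets of `u` with `ρ (exp (u + v)) ≤ n ρ (exp v)` for
all `v`. -/
lemma exists_eventually_rbar_le (hρ : IsClassB ρ) :
    ∃ s₀ > 0, ∃ C, ∀ᶠ s in 𝓝 s₀, rbar ρ s ≤ C := by
  have hcont : Continuous fun u => ρ (Real.exp u) :=
    hρ.cont.comp_continuous Real.continuous_exp Real.exp_pos
  have hclosed : ∀ n : ℕ, IsClosed {u | ∀ v, ρ (Real.exp (u + v)) ≤ n * ρ (Real.exp v)} :=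
    fun n => by
      simp only [ofPred_forall]
      exact isClosed_iInter fun v =>
        isClosed_le (hcont.comp (continuous_id.add continuous_const)) continuous_const
  have hcover : ⋃ n : ℕ, {u | ∀ v, ρ (Real.exp (u + v)) ≤ n * ρ (Real.exp v)} = univ := by
    refine eq_univ_of_forall fun u => ?_
    obtain ⟨n, hn⟩ := exists_nat_ge (rbar ρ (Real.exp u))
    refine mem_iUnion.2 ⟨n, fun v => ?_⟩
    rw [Real.exp_add]
    exact (hρ.apply_mul_le (Real.exp_pos _) (Real.exp_pos _)).trans
      (mul_le_mul_of_nonneg_right hn (hρ.pos _ (Real.exp_pos _)).le)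
  obtain ⟨n, u₀, hu₀⟩ := nonempty_interior_of_iUnion_of_closed hclosed hcover
  have hlog : Tendsto Real.log (𝓝 (Real.exp u₀)) (𝓝 u₀) := by
    simpa using (Real.continuousAt_log (Real.exp_pos u₀).ne').tendsto
  refine ⟨Real.exp u₀, Real.exp_pos u₀, n, ?_⟩
  filter_upwards [hlog.eventually (mem_interior_iff_mem_nhds.1 hu₀), lt_mem_nhds (Real.exp_pos u₀)]
    with s hs hs0
  refine hρ.rbar_le fun t ht => ?_
  simpa [Real.exp_add, Real.exp_log hs0, Real.exp_log ht] using hs (Real.log t)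

lemma eventually_rbar_le (hρ : IsClassB ρ) {s : ℝ} (hs : 0 < s) :
    ∃ C, ∀ᶠ s' in 𝓝 s, rbar ρ s' ≤ C := by
  obtain ⟨s₀, hs₀, C, hC⟩ := hρ.exists_eventually_rbar_le
  have hscale : Tendsto (fun s' => s₀ / s * s') (𝓝 s) (𝓝 s₀) := by
    simpa [div_mul_cancel₀ s₀ hs.ne'] using (tendsto_id (x := 𝓝 s)).const_mul (s₀ / s)
  refine ⟨rbar ρ (s / s₀) * C, ?_⟩
  filter_upwards [hscale.eventually hC, lt_mem_nhds hs] with s' hs' hs'0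
  calc rbar ρ s' = rbar ρ (s / s₀ * (s₀ / s * s')) := by congr 1; field_simp
    _ ≤ rbar ρ (s / s₀) * rbar ρ (s₀ / s * s') := hρ.rbar_mul_le (by positivity) (by positivity)
    _ ≤ rbar ρ (s / s₀) * C := mul_le_mul_of_nonneg_left hs' (hρ.rbar_pos (by positivity)).le

lemma bddAbove_rbar_image (hρ : IsClassB ρ) {K : Set ℝ} (hK : IsCompact K) (hK0 : K ⊆ Ioi 0) :
    BddAbove (rbar ρ '' K) := by
  refine hK.induction_on (p := fun s => BddAbove (rbar ρ '' s)) (by simp)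
    (fun s t hst ht => ht.mono (image_mono hst))
    (fun s t hs ht => by rw [image_union]; exact hs.union ht) fun s hs => ?_
  obtain ⟨C, hC⟩ := hρ.eventually_rbar_le (hK0 hs)
  exact ⟨_, mem_nhdsWithin_of_mem_nhds hC, C, forall_mem_image.2 fun _ h => h⟩

lemma min_mul_rbar_le_of_mem_Icc (hρ : IsClassB ρ) {s t C : ℝ} (hs : 0 < s)
    (ht : t ∈ Icc s (2 * s)) (hC : ∀ u ∈ Icc (1 / 2) 1, rbar ρ u ≤ C) :
    min 1 s⁻¹ * rbar ρ s * s⁻¹ ≤ 4 * C * (min 1 t⁻¹ * rbar ρ t * t⁻¹) := by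
  have ht0 : 0 < t := hs.trans_le ht.1
  have hinv : s⁻¹ ≤ 2 * t⁻¹ := by
    rw [← div_eq_mul_inv, le_div_iff₀ ht0, inv_mul_le_iff₀ hs, mul_comm]
    exact ht.2
  have hmin : min 1 s⁻¹ ≤ 2 * min 1 t⁻¹ := by
    rw [mul_min_of_nonneg _ _ zero_le_two]
    exact min_le_min (by norm_num) hinv
  have hrbar : rbar ρ s ≤ C * rbar ρ t := by
    calc rbar ρ s = rbar ρ (s / t * t) := by rw [div_mul_cancel₀ s ht0.ne']
      _ ≤ rbar ρ (s / t) * rbar ρ t := hρ.rbar_mul_le (by positivity) ht0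
      _ ≤ C * rbar ρ t := by
        refine mul_le_mul_of_nonneg_right (hC _ ⟨?_, ?_⟩) (hρ.rbar_pos ht0).le
        · rw [div_le_div_iff₀ two_pos ht0]; linarith [ht.2]
        · exact (div_le_one ht0).2 ht.1
  have hrs := hρ.rbar_pos hs
  have hCt : 0 ≤ C * rbar ρ t := hrs.le.trans hrbar
  calc min 1 s⁻¹ * rbar ρ s * s⁻¹ ≤ 2 * min 1 t⁻¹ * (C * rbar ρ t) * (2 * t⁻¹) := by gcongr
    _ = 4 * C * (min 1 t⁻¹ * rbar ρ t * t⁻¹) := by ring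

end IsClassB

/-- The kernel which, at `i = k + m - n`, bounds `K(2ⁿ, T(u_k, v_m)) / ρ(2ⁿ)` relative to the
weighted `J`-sequences of `u` and `v`, when `T` has bound `c₀` from `E₀ × F₀` to `G₀` and `c₁` from
`E₁ × F₁` to `G₁`. -/
noncomputable def dyadicKernel (ρ : ℝ → ℝ) (c₀ c₁ : ℝ≥0∞) (i : ℤ) : ℝ≥0∞ :=
  min c₀ (c₁ * ENNReal.ofReal ((2 : ℝ) ^ i)⁻¹) * ENNReal.ofReal (rbar ρ (2 ^ i))

lemma dyadicKernel_mono (ρ : ℝ → ℝ) {c₀ c₁ d₀ d₁ : ℝ≥0∞} (h₀ : c₀ ≤ d₀) (h₁ : c₁ ≤ d₁) (i : ℤ) :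
    dyadicKernel ρ c₀ c₁ i ≤ dyadicKernel ρ d₀ d₁ i := by
  unfold dyadicKernel
  gcongr

lemma dyadicKernel_self (ρ : ℝ → ℝ) (M : ℝ≥0∞) (i : ℤ) :
    dyadicKernel ρ M M i = M * dyadicKernel ρ 1 1 i := by
  rw [dyadicKernel, dyadicKernel, one_mul, ← mul_assoc, mul_min, mul_one]

lemma IsClassB.dyadicKernel_one_le_setLIntegral {ρ : ℝ → ℝ} (hρ : IsClassB ρ) {C : ℝ} (hC0 : 0 ≤ C)
    (hC : ∀ u ∈ Icc (1 / 2 : ℝ) 1, rbar ρ u ≤ C) (i : ℤ) :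
    dyadicKernel ρ 1 1 i ≤ ENNReal.ofReal (4 * C) *
      ∫⁻ t in Ioc ((2 : ℝ) ^ i) (2 ^ (i + 1)), ENNReal.ofReal (min 1 t⁻¹ * rbar ρ t * t⁻¹) := by
  set f : ℝ → ℝ := fun t => min 1 t⁻¹ * rbar ρ t * t⁻¹
  have htwo : (0 : ℝ) < 2 ^ i := by positivity
  have hsucc : (2 : ℝ) ^ (i + 1) = 2 * 2 ^ i := by rw [zpow_add_one₀ two_ne_zero, mul_comm]
  calc dyadicKernel ρ 1 1 i
      = ∫⁻ _ in Ioc ((2 : ℝ) ^ i) (2 ^ (i + 1)), ENNReal.ofReal (f (2 ^ i)) := by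
        rw [setLIntegral_const, Real.volume_Ioc, hsucc, two_mul, add_sub_cancel_right,
          ENNReal.ofReal_mul (by have := hρ.rbar_pos htwo; positivity), mul_assoc,
          ← ENNReal.ofReal_mul (by positivity), inv_mul_cancel₀ htwo.ne', ENNReal.ofReal_one,
          mul_one, ENNReal.ofReal_mul (by positivity), ENNReal.ofReal_min, ENNReal.ofReal_one,
          dyadicKernel, one_mul]
    _ ≤ ∫⁻ t in Ioc ((2 : ℝ) ^ i) (2 ^ (i + 1)),
          ENNReal.ofReal (4 * C) * ENNReal.ofReal (f t) := by
        refine setLIntegral_mono' measurableSet_Ioc fun t ht => ?_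
        rw [← ENNReal.ofReal_mul (by positivity)]
        exact ENNReal.ofReal_le_ofReal
          (hρ.min_mul_rbar_le_of_mem_Icc htwo ⟨ht.1.le, hsucc ▸ ht.2⟩ hC)
    _ = _ := lintegral_const_mul' _ _ ENNReal.ofReal_ne_top

lemma pairwise_disjoint_Ioc_two_zpow :
    Pairwise (Function.onFun Disjoint fun i : ℤ => Ioc ((2 : ℝ) ^ i) (2 ^ (i + 1))) :=
  (zpow_right_mono₀ one_le_two).pairwise_disjoint_on_Ioc_succ

lemma tendsto_tsum_of_dominated {ι α : Type*} [Countable ι] {l : Filter α}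
    [l.IsCountablyGenerated] {f : α → ι → ℝ≥0∞} {g bound : ι → ℝ≥0∞} (hbound : ∑' i, bound i ≠ ∞)
    (hle : ∀ᶠ n in l, ∀ i, f n i ≤ bound i) (hlim : ∀ i, Tendsto (f · i) l (𝓝 (g i))) :
    Tendsto (fun n => ∑' i, f n i) l (𝓝 (∑' i, g i)) := by
  let _ : MeasurableSpace ι := ⊤
  simp only [← lintegral_count] at hbound ⊢
  exact tendsto_lintegral_filter_of_dominated_convergence bound
    (.of_forall fun n => Measurable.of_discrete) (hle.mono fun n hn => .of_forall hn) hbound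
    (.of_forall hlim)

namespace IsClassBpm

variable {ρ : ℝ → ℝ}

lemma tsum_dyadicKernel_one_ne_top (hρ : IsClassBpm ρ) : ∑' i, dyadicKernel ρ 1 1 i ≠ ∞ := by
  obtain ⟨C, hC⟩ := hρ.bddAbove_rbar_image (isCompact_Icc (a := (1 / 2 : ℝ)) (b := 1))
    fun s hs => lt_of_lt_of_le (by norm_num) hs.1
  have hC0 : 0 ≤ C := (hρ.rbar_pos one_pos).le.trans (forall_mem_image.1 hC (by norm_num))
  refine ne_top_of_le_ne_top ?_ (ENNReal.tsum_le_tsum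
    (hρ.dyadicKernel_one_le_setLIntegral hC0 (forall_mem_image.1 hC)))
  rw [ENNReal.tsum_mul_left,
    ← lintegral_iUnion (fun _ => measurableSet_Ioc) pairwise_disjoint_Ioc_two_zpow]
  refine ENNReal.mul_ne_top ENNReal.ofReal_ne_top
    (ne_top_of_le_ne_top hρ.integ.lintegral_lt_top.ne (lintegral_mono_set ?_))
  exact iUnion_subset fun i t ht => (zpow_pos two_pos i).trans ht.1

lemma tsum_dyadicKernel_ne_top (hρ : IsClassBpm ρ) {c₀ c₁ : ℝ≥0∞} (h₀ : c₀ ≠ ∞) (h₁ : c₁ ≠ ∞) :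
    ∑' i, dyadicKernel ρ c₀ c₁ i ≠ ∞ := by
  refine ne_top_of_le_ne_top ?_
    (ENNReal.tsum_le_tsum (dyadicKernel_mono ρ (le_max_left c₀ c₁) (le_max_right c₀ c₁)))
  simp only [dyadicKernel_self ρ (max c₀ c₁), ENNReal.tsum_mul_left]
  exact ENNReal.mul_ne_top (max_lt h₀.lt_top h₁.lt_top).ne hρ.tsum_dyadicKernel_one_ne_top

lemma tendsto_tsum_dyadicKernel_left (hρ : IsClassBpm ρ) {M : ℝ≥0∞} (hM : M ≠ ∞) :
    Tendsto (fun ε => ∑' i, dyadicKernel ρ ε M i) (𝓝 0) (𝓝 0) := by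
  have hle : ∀ᶠ ε in 𝓝 (0 : ℝ≥0∞), ∀ i, dyadicKernel ρ ε M i ≤ dyadicKernel ρ 1 M i := by
    filter_upwards [ge_mem_nhds one_pos] with ε hε i using dyadicKernel_mono ρ hε le_rfl i
  have hlim : ∀ i, Tendsto (dyadicKernel ρ · M i) (𝓝 0) (𝓝 0) := fun i => by
    simpa [dyadicKernel] using ENNReal.Tendsto.mul_const ((tendsto_id (x := 𝓝 0)).min
      (tendsto_const_nhds (x := M * ENNReal.ofReal ((2 : ℝ) ^ i)⁻¹)))
      (Or.inr (ENNReal.ofReal_ne_top (r := rbar ρ (2 ^ i))))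
  simpa using tendsto_tsum_of_dominated (hρ.tsum_dyadicKernel_ne_top one_ne_top hM) hle hlim

lemma tendsto_tsum_dyadicKernel_right (hρ : IsClassBpm ρ) {M : ℝ≥0∞} (hM : M ≠ ∞) :
    Tendsto (fun ε => ∑' i, dyadicKernel ρ M ε i) (𝓝 0) (𝓝 0) := by
  have hle : ∀ᶠ ε in 𝓝 (0 : ℝ≥0∞), ∀ i, dyadicKernel ρ M ε i ≤ dyadicKernel ρ M 1 i := by
    filter_upwards [ge_mem_nhds one_pos] with ε hε i using dyadicKernel_mono ρ le_rfl hε i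
  have hlim : ∀ i, Tendsto (dyadicKernel ρ M · i) (𝓝 0) (𝓝 0) := fun i => by
    simpa [dyadicKernel] using ENNReal.Tendsto.mul_const ((tendsto_const_nhds (x := M)).min
      (ENNReal.Tendsto.mul_const (tendsto_id (x := 𝓝 0))
        (Or.inr (ENNReal.ofReal_ne_top (r := ((2 : ℝ) ^ i)⁻¹)))))
      (Or.inr (ENNReal.ofReal_ne_top (r := rbar ρ (2 ^ i))))
  simpa using tendsto_tsum_of_dominated (hρ.tsum_dyadicKernel_ne_top hM one_ne_top) hle hlim

end IsClassBpm

/-! ### The `K`-functional -/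

lemma IsESeminorm.iInf_fiber {W V : Type*} [AddCommGroup W] [Module ℝ W] [AddCommGroup V]
    [Module ℝ V] {N : W → ℝ≥0∞} (hN : IsESeminorm N) (f : W →ₗ[ℝ] V) :
    IsESeminorm fun x => ⨅ (w : W) (_ : f w = x), N w where
  add_le x y := by
    simp only [ENNReal.iInf_add, ENNReal.add_iInf]
    refine le_iInf₂ fun w' hw' => le_iInf₂ fun w hw => ?_
    exact iInf₂_le_of_le (w + w') (by rw [map_add, hw, hw']) (hN.add_le w w')
  smul_le c x := by
    rcases eq_or_ne c 0 with rfl | hc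
    · exact iInf₂_le_of_le 0 (by simp) (by simp [hN.map_zero])
    · simp only [ENNReal.mul_iInf_of_ne (enorm_ne_zero.2 hc) enorm_ne_top]
      exact le_iInf₂ fun w hw => iInf₂_le_of_le (c • w) (by rw [map_smul, hw]) (hN.smul_le c w)

lemma isESeminorm_enorm {E : Type*} [NormedAddCommGroup E] [NormedSpace ℝ E] :
    IsESeminorm fun a : E => ‖a‖ₑ where
  add_le := enorm_add_le
  smul_le c a := (enorm_smul c a).le

lemma isESeminorm_enorm_fst_add_snd {E₀ E₁ : Type*} [NormedAddCommGroup E₀] [NormedSpace ℝ E₀]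
    [NormedAddCommGroup E₁] [NormedSpace ℝ E₁] (t : ℝ≥0∞) :
    IsESeminorm fun w : E₀ × E₁ => ‖w.1‖ₑ + t * ‖w.2‖ₑ where
  add_le w w' := by
    calc ‖w.1 + w'.1‖ₑ + t * ‖w.2 + w'.2‖ₑ ≤ ‖w.1‖ₑ + ‖w'.1‖ₑ + t * (‖w.2‖ₑ + ‖w'.2‖ₑ) := by
          gcongr <;> exact enorm_add_le _ _
      _ = _ := by ring
  smul_le c w := by
    rw [Prod.smul_fst, Prod.smul_snd, enorm_smul, enorm_smul]
    exact le_of_eq (by ring)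

lemma isESeminorm_enormOf {E V : Type*} [NormedAddCommGroup E] [NormedSpace ℝ E] [AddCommGroup V]
    [Module ℝ V] (i : E →ₗ[ℝ] V) : IsESeminorm (enormOf i) :=
  isESeminorm_enorm.iInf_fiber i

lemma enormOf_apply_le {E V : Type*} [NormedAddCommGroup E] [NormedSpace ℝ E] [AddCommGroup V]
    [Module ℝ V] (i : E →ₗ[ℝ] V) (a : E) : enormOf i (i a) ≤ ‖a‖ₑ :=
  iInf₂_le_of_le a rfl le_rfl

lemma ofReal_norm_add_mul {E₀ E₁ : Type*} [SeminormedAddCommGroup E₀]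
    [SeminormedAddCommGroup E₁] {t : ℝ} (ht : 0 ≤ t) (a : E₀) (b : E₁) :
    ENNReal.ofReal (‖a‖ + t * ‖b‖) = ‖a‖ₑ + ENNReal.ofReal t * ‖b‖ₑ := by
  rw [ENNReal.ofReal_add (norm_nonneg a) (by positivity), ENNReal.ofReal_mul ht, ofReal_norm,
    ofReal_norm]

section Couple

variable {E₀ E₁ V : Type*} [NormedAddCommGroup E₀] [NormedSpace ℝ E₀]
  [NormedAddCommGroup E₁] [NormedSpace ℝ E₁] [AddCommGroup V] [Module ℝ V]
  (i₀ : E₀ →ₗ[ℝ] V) (i₁ : E₁ →ₗ[ℝ] V)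

lemma eKfun_eq_iInf_fiber {t : ℝ} (ht : 0 ≤ t) (x : V) : eKfun i₀ i₁ t x =
    ⨅ (w : E₀ × E₁) (_ : i₀.coprod i₁ w = x), (‖w.1‖ₑ + ENNReal.ofReal t * ‖w.2‖ₑ) := by
  simp only [eKfun, ofReal_norm_add_mul ht, iInf_prod, LinearMap.coprod_apply, eq_comm (a := x)]

lemma isESeminorm_eKfun {t : ℝ} (ht : 0 ≤ t) : IsESeminorm (eKfun i₀ i₁ t) := by
  rw [funext (eKfun_eq_iInf_fiber i₀ i₁ ht)]
  exact (isESeminorm_enorm_fst_add_snd _).iInf_fiber (i₀.coprod i₁)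

lemma isESeminorm_esumNorm : IsESeminorm (esumNorm i₀ i₁) := isESeminorm_eKfun i₀ i₁ zero_le_one

lemma eKfun_add_apply_le {t : ℝ} (ht : 0 ≤ t) (a : E₀) (b : E₁) :
    eKfun i₀ i₁ t (i₀ a + i₁ b) ≤ ‖a‖ₑ + ENNReal.ofReal t * ‖b‖ₑ := by
  rw [eKfun_eq_iInf_fiber i₀ i₁ ht]
  exact iInf₂_le_of_le (a, b) rfl le_rfl

variable {i₀ i₁} in
lemma exists_lt_of_eKfun_lt {t : ℝ} (ht : 0 ≤ t) {x : V} {c : ℝ≥0∞} (h : eKfun i₀ i₁ t x < c) :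
    ∃ a b, x = i₀ a + i₁ b ∧ ‖a‖ₑ + ENNReal.ofReal t * ‖b‖ₑ < c := by
  simp only [eKfun, ofReal_norm_add_mul ht, iInf_lt_iff] at h
  obtain ⟨a, b, hx, hlt⟩ := h
  exact ⟨a, b, hx, hlt⟩

lemma eKfun_le_enormOf_left {t : ℝ} (ht : 0 ≤ t) (x : V) : eKfun i₀ i₁ t x ≤ enormOf i₀ x := by
  refine le_iInf₂ fun a ha => ?_
  simpa [ha, enorm_eq_nnnorm] using eKfun_add_apply_le i₀ i₁ ht a 0

lemma eKfun_le_enormOf_right {t : ℝ} (ht : 0 < t) (x : V) :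
    eKfun i₀ i₁ t x ≤ ENNReal.ofReal t * enormOf i₁ x := by
  simp only [enormOf,
    ENNReal.mul_iInf_of_ne (ENNReal.ofReal_pos.2 ht).ne' ENNReal.ofReal_ne_top]
  refine le_iInf₂ fun b hb => ?_
  simpa [hb, enorm_eq_nnnorm] using eKfun_add_apply_le i₀ i₁ ht.le 0 b

lemma eKfun_apply_le_min {t : ℝ} (ht : 0 < t) {a : E₀} {b : E₁} (hab : i₀ a = i₁ b) :
    eKfun i₀ i₁ t (i₀ a) ≤ min ‖a‖ₑ (ENNReal.ofReal t * ‖b‖ₑ) := by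
  refine le_min ((eKfun_le_enormOf_left i₀ i₁ ht.le _).trans (enormOf_apply_le i₀ a)) ?_
  rw [hab]
  exact (eKfun_le_enormOf_right i₀ i₁ ht _).trans (by gcongr; exact enormOf_apply_le i₁ b)

lemma eKfun_le_max_mul_esumNorm {t : ℝ} (ht : 0 ≤ t) (x : V) :
    eKfun i₀ i₁ t x ≤ ENNReal.ofReal (max 1 t) * esumNorm i₀ i₁ x := by
  simp only [esumNorm, eKfun_eq_iInf_fiber i₀ i₁ ht, eKfun_eq_iInf_fiber i₀ i₁ zero_le_one]
  simp only [ENNReal.mul_iInf_of_ne (a := ENNReal.ofReal (max 1 t)) (by simp) ENNReal.ofReal_ne_top]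
  refine le_iInf₂ fun w hw => iInf₂_le_of_le w hw ?_
  rw [ENNReal.ofReal_one, one_mul, mul_add]
  gcongr
  · exact le_mul_of_one_le_left zero_le (by simp)
  · exact le_max_right 1 t

end Couple

/-! ### `J`-representations and the fundamental lemma -/

section Sequences

variable {E₀ E₁ : Type*} [NormedAddCommGroup E₀] [NormedAddCommGroup E₁]

/-- The weighted sequence `J(2ⁿ, uₙ) / w(2ⁿ)` of a `J`-representation with `uₙ = a n = b n`. -/
noncomputable def jSeq (w : ℝ → ℝ) (a : ℤ → E₀) (b : ℤ → E₁) (n : ℤ) : ℝ≥0∞ :=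
  max ‖a n‖ₑ (ENNReal.ofReal (2 ^ n) * ‖b n‖ₑ) / ENNReal.ofReal (w (2 ^ n))

/-- The weighted sequence `(‖aₙ‖ + 2ⁿ‖bₙ‖) / w(2ⁿ)` of a choice of decompositions `z = aₙ + bₙ`;
its infimum over all choices is the sequence `K(2ⁿ, z) / w(2ⁿ)`. -/
noncomputable def kSeq (w : ℝ → ℝ) (a : ℤ → E₀) (b : ℤ → E₁) (n : ℤ) : ℝ≥0∞ :=
  (‖a n‖ₑ + ENNReal.ofReal (2 ^ n) * ‖b n‖ₑ) / ENNReal.ofReal (w (2 ^ n))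

lemma ofReal_max_norm_div {t w : ℝ} (ht : 0 ≤ t) (hw : 0 < w) (a : E₀) (b : E₁) :
    ENNReal.ofReal (max ‖a‖ (t * ‖b‖) / w) =
      max ‖a‖ₑ (ENNReal.ofReal t * ‖b‖ₑ) / ENNReal.ofReal w := by
  rw [ENNReal.ofReal_div_of_pos hw, ENNReal.ofReal_max, ENNReal.ofReal_mul ht, ofReal_norm,
    ofReal_norm]

lemma ofReal_inv_mul_ofReal_mul {t : ℝ} (ht : 0 < t) (c : ℝ≥0∞) :
    ENNReal.ofReal t⁻¹ * (ENNReal.ofReal t * c) = c := by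
  rw [← mul_assoc, ← ENNReal.ofReal_mul (by positivity), inv_mul_cancel₀ ht.ne',
    ENNReal.ofReal_one, one_mul]

lemma IsClassB.min_le_dyadicKernel_mul {ρ : ℝ → ℝ} (hρ : IsClassB ρ) (n : ℤ) (α β : ℝ≥0∞) :
    min α β ≤ dyadicKernel ρ 1 1 n *
      (max α (ENNReal.ofReal (2 ^ n) * β) / ENNReal.ofReal (ρ (2 ^ n))) := by
  set t : ℝ := 2 ^ n with ht
  have ht0 : 0 < t := by positivity
  set J : ℝ≥0∞ := max α (ENNReal.ofReal t * β)
  have hβ : β ≤ ENNReal.ofReal t⁻¹ * J := by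
    calc β = ENNReal.ofReal t⁻¹ * (ENNReal.ofReal t * β) := (ofReal_inv_mul_ofReal_mul ht0 β).symm
      _ ≤ _ := by gcongr; exact le_max_right _ _
  have hJ : J ≤ ENNReal.ofReal (rbar ρ t) * (J / ENNReal.ofReal (ρ t)) := by
    calc J = ENNReal.ofReal (ρ t) * (J / ENNReal.ofReal (ρ t)) :=
          (ENNReal.mul_div_cancel (ENNReal.ofReal_pos.2 (hρ.pos t ht0)).ne'
            ENNReal.ofReal_ne_top).symm
      _ ≤ _ := by
          gcongr
          simpa [hρ.one] using hρ.apply_mul_le ht0 one_pos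
  calc min α β ≤ min 1 (ENNReal.ofReal t⁻¹) * J := by
        rw [min_mul, one_mul]
        exact min_le_min (le_max_left _ _) hβ
    _ ≤ min 1 (ENNReal.ofReal t⁻¹) *
          (ENNReal.ofReal (rbar ρ t) * (J / ENNReal.ofReal (ρ t))) := by gcongr
    _ = _ := by rw [dyadicKernel, one_mul, ← ht, mul_assoc]

lemma enorm_left_le_dyadicKernel_mul_kSeq {ρ : ℝ → ℝ} (hρ : IsClassB ρ) {n : ℤ} (hn : n ≤ 0)
    (a : ℤ → E₀) (b : ℤ → E₁) : ‖a n‖ₑ ≤ dyadicKernel ρ 1 1 n * kSeq ρ a b n := by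
  have h := hρ.min_le_dyadicKernel_mul n ‖a n‖ₑ ‖a n‖ₑ
  have htwo : ENNReal.ofReal (2 ^ n) ≤ 1 :=
    ENNReal.ofReal_le_one.2 (zpow_le_one_of_nonpos₀ one_le_two hn)
  rw [min_self, max_eq_left (mul_le_of_le_one_left zero_le htwo)] at h
  refine h.trans ?_
  unfold kSeq
  gcongr
  exact le_self_add

lemma enorm_right_le_dyadicKernel_mul_kSeq {ρ : ℝ → ℝ} (hρ : IsClassB ρ) {n : ℤ} (hn : 0 ≤ n)
    (a : ℤ → E₀) (b : ℤ → E₁) : ‖b n‖ₑ ≤ dyadicKernel ρ 1 1 n * kSeq ρ a b n := by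
  have h := hρ.min_le_dyadicKernel_mul n ‖b n‖ₑ ‖b n‖ₑ
  have htwo : 1 ≤ ENNReal.ofReal (2 ^ n) :=
    ENNReal.one_le_ofReal.2 (one_le_zpow₀ one_le_two hn)
  rw [min_self, max_eq_right (le_mul_of_one_le_left zero_le htwo)] at h
  refine h.trans ?_
  unfold kSeq
  gcongr
  exact le_add_self

lemma jSeq_sub_le {ρ : ℝ → ℝ} (hρ : IsClassB ρ) (a : ℤ → E₀) (b : ℤ → E₁) (n : ℤ) :
    jSeq ρ (fun n => a n - a (n - 1)) (fun n => b (n - 1) - b n) n ≤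
      kSeq ρ a b n + 2 * ENNReal.ofReal (rbar ρ 2⁻¹) * kSeq ρ a b (n - 1) := by
  set t : ℝ := 2 ^ n with ht
  have ht' : (2 : ℝ) ^ (n - 1) = 2⁻¹ * t := by rw [zpow_sub_one₀ two_ne_zero, mul_comm]
  have ht0 : 0 < t := by positivity
  have hρ' : (ENNReal.ofReal (ρ t))⁻¹ ≤
      ENNReal.ofReal (rbar ρ 2⁻¹) * (ENNReal.ofReal (ρ (2⁻¹ * t)))⁻¹ := by
    have h2t : (0 : ℝ) < 2⁻¹ * t := by positivity
    rw [← ENNReal.ofReal_inv_of_pos (hρ.pos t ht0), ← ENNReal.ofReal_inv_of_pos (hρ.pos _ h2t),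
      ← ENNReal.ofReal_mul (hρ.rbar_pos (by norm_num)).le]
    exact ENNReal.ofReal_le_ofReal (hρ.inv_apply_le (by norm_num) ht0)
  have htwo : ENNReal.ofReal t = 2 * ENNReal.ofReal (2⁻¹ * t) := by
    rw [← ENNReal.ofReal_ofNat 2, ← ENNReal.ofReal_mul zero_le_two]
    congr 1
    ring
  have hmax : max ‖a n - a (n - 1)‖ₑ (ENNReal.ofReal t * ‖b (n - 1) - b n‖ₑ) ≤
      (‖a n‖ₑ + ENNReal.ofReal t * ‖b n‖ₑ) +
        2 * (‖a (n - 1)‖ₑ + ENNReal.ofReal (2⁻¹ * t) * ‖b (n - 1)‖ₑ) := by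
    rw [mul_add, ← mul_assoc, ← htwo]
    refine max_le (enorm_sub_le.trans ?_) ((mul_le_mul_right enorm_sub_le _).trans ?_)
    · gcongr
      · exact le_self_add
      · exact (le_mul_of_one_le_left zero_le one_le_two).trans le_self_add
    · rw [mul_add, add_comm]
      gcongr <;> exact le_add_self
  simp only [jSeq, kSeq, ← ht, ht', div_eq_mul_inv]
  refine (mul_le_mul_left hmax _).trans ?_
  rw [add_mul]
  exact add_le_add le_rfl ((mul_le_mul_right hρ' _).trans_eq (by ring))

end Sequences

lemma sum_Ioc_neg_sub {V : Type*} [AddCommGroup V] (f : ℤ → V) (N : ℕ) :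
    ∑ n ∈ Finset.Ioc (-(N : ℤ)) N, (f n - f (n - 1)) = f N - f (-N) := by
  induction N with
  | zero => simp
  | succ N ih =>
    have hIoc : Finset.Ioc (-((N + 1 : ℕ) : ℤ)) ((N + 1 : ℕ) : ℤ) =
        insert ((N : ℤ) + 1) (insert (-(N : ℤ)) (Finset.Ioc (-(N : ℤ)) N)) := by
      ext x
      simp only [Finset.mem_Ioc, Finset.mem_insert]
      omega
    rw [hIoc, Finset.sum_insert (by simp), Finset.sum_insert (by simp), ih,
      add_sub_cancel_right, ← neg_add', ← Nat.cast_succ]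
    abel

lemma tendsto_neg_add_natCast_of_tsum_ne_top {f : ℤ → ℝ≥0∞} (hf : ∑' n, f n ≠ ∞) :
    Tendsto (fun N : ℕ => f (-N) + f N) atTop (𝓝 0) := by
  have hlim := ENNReal.tendsto_cofinite_zero_of_tsum_ne_top hf
  rw [Int.cofinite_eq] at hlim
  have hneg := (hlim.mono_left le_sup_left).comp
    (tendsto_neg_atTop_atBot.comp tendsto_natCast_atTop_atTop)
  have hpos := (hlim.mono_left le_sup_right).comp (tendsto_natCast_atTop_atTop (R := ℤ))
  simpa using hneg.add hpos

lemma tendsto_Ioc_neg_atTop : Tendsto (fun N : ℕ => Finset.Ioc (-(N : ℤ)) N) atTop atTop := by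
  refine tendsto_atTop_finset_of_monotone
    (fun M N h => Finset.Ioc_subset_Ioc (by simpa using h) (by simpa using h)) fun x => ?_
  exact ⟨x.natAbs + 1, Finset.mem_Ioc.2 (by omega)⟩

lemma sum_sdiff_le_tsum_subtype_compl {ι : Type*} [DecidableEq ι] (f : ι → ℝ≥0∞)
    (F G : Finset ι) : ∑ n ∈ F \ G, f n ≤ ∑' n : {n // n ∉ G}, f n := by
  calc ∑ n ∈ F \ G, f n = ∑ n ∈ F \ G, indicator {n | n ∉ G} f n :=
        Finset.sum_congr rfl fun n hn => (indicator_of_mem (Finset.mem_sdiff.1 hn).2 f).symm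
    _ ≤ ∑' n, indicator {n | n ∉ G} f n := ENNReal.sum_le_tsum _
    _ = _ := (tsum_subtype _ f).symm

section Couple

variable {E₀ E₁ V : Type*} [NormedAddCommGroup E₀] [NormedSpace ℝ E₀]
  [NormedAddCommGroup E₁] [NormedSpace ℝ E₁] [AddCommGroup V] [Module ℝ V]
  {i₀ : E₀ →ₗ[ℝ] V} {i₁ : E₁ →ₗ[ℝ] V} {x z : V} {a : ℤ → E₀} {b : ℤ → E₁}

lemma isJRep_iff_tendsto : IsJRep i₀ i₁ x a b ↔ (∀ n, i₀ (a n) = i₁ (b n)) ∧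
    Tendsto (fun G => esumNorm i₀ i₁ (x - ∑ n ∈ G, i₀ (a n))) atTop (𝓝 0) := by
  refine and_congr_right fun _ => ⟨fun h => ?_, fun h ε hε => ?_⟩
  · refine ENNReal.tendsto_nhds_zero.2 fun ε hε => ?_
    obtain ⟨δ, -, hδ0, hδ⟩ := ENNReal.lt_iff_exists_real_btwn.1 hε
    obtain ⟨F, hF⟩ := h δ (ENNReal.ofReal_pos.1 hδ0)
    exact eventually_atTop.2 ⟨F, fun G hG => ((hF G hG).trans hδ).le⟩
  · exact eventually_atTop.1 (h.eventually_lt_const (ENNReal.ofReal_pos.2 hε))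

lemma isJRep_of_tendsto {ι : Type*} {l : Filter ι} [l.NeBot] {s : ι → Finset ℤ}
    (hs : Tendsto s l atTop) (hab : ∀ n, i₀ (a n) = i₁ (b n))
    (hsum : ∑' n, esumNorm i₀ i₁ (i₀ (a n)) ≠ ∞)
    (hlim : Tendsto (fun j => esumNorm i₀ i₁ (x - ∑ n ∈ s j, i₀ (a n))) l (𝓝 0)) :
    IsJRep i₀ i₁ x a b := by
  classical
  have hN := isESeminorm_esumNorm i₀ i₁
  refine isJRep_iff_tendsto.2 ⟨hab, tendsto_of_tendsto_of_tendsto_of_le_of_le tendsto_const_nhds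
    (ENNReal.tendsto_tsum_compl_atTop_zero hsum) (fun _ => zero_le) fun G => ?_⟩
  refine ge_of_tendsto (x := l)
    (f := fun j => esumNorm i₀ i₁ (x - ∑ n ∈ s j, i₀ (a n)) +
      ∑' n : {n // n ∉ G}, esumNorm i₀ i₁ (i₀ (a n))) (by simpa using hlim.add_const _) ?_
  filter_upwards [hs.eventually_ge_atTop G] with j hj
  refine (hN.sub_le_add _ (∑ n ∈ s j, i₀ (a n)) _).trans ?_
  gcongr
  calc esumNorm i₀ i₁ (∑ n ∈ s j, i₀ (a n) - ∑ n ∈ G, i₀ (a n))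
      ≤ ∑ n ∈ s j \ G, esumNorm i₀ i₁ (i₀ (a n)) := by
        rw [← Finset.sum_sdiff hj, add_sub_cancel_right]
        exact hN.sum_le _ _
    _ ≤ _ := sum_sdiff_le_tsum_subtype_compl _ _ _

lemma eJNorm_eq {w : ℝ → ℝ} (hw : ∀ t > 0, 0 < w t) (q : ℝ≥0∞) (x : V) : eJNorm i₀ i₁ w q x =
    ⨅ (a : ℤ → E₀) (b : ℤ → E₁) (_ : IsJRep i₀ i₁ x a b), eLq q (jSeq w a b) := by
  have hn : ∀ n : ℤ, (0 : ℝ) < 2 ^ n := fun n => by positivity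
  simp only [eJNorm, ofReal_max_norm_div (hn _).le (hw _ (hn _))]
  rfl

lemma exists_isJRep_of_eJNorm_lt {w : ℝ → ℝ} (hw : ∀ t > 0, 0 < w t) {q c : ℝ≥0∞}
    (h : eJNorm i₀ i₁ w q x < c) : ∃ a b, IsJRep i₀ i₁ x a b ∧ eLq q (jSeq w a b) < c := by
  simpa only [eJNorm_eq hw, iInf_lt_iff, exists_prop] using h

lemma esumNorm_apply_le_dyadicKernel_mul_jSeq {ρ : ℝ → ℝ} (hρ : IsClassB ρ)
    (h : ∀ n, i₀ (a n) = i₁ (b n)) (n : ℤ) :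
    esumNorm i₀ i₁ (i₀ (a n)) ≤ dyadicKernel ρ 1 1 n * jSeq ρ a b n := by
  refine le_trans ?_ (hρ.min_le_dyadicKernel_mul n ‖a n‖ₑ ‖b n‖ₑ)
  simpa [esumNorm] using eKfun_apply_le_min i₀ i₁ one_pos (h n)

lemma exists_decomposition_eLq_kSeq_le {ρ : ℝ → ℝ} (hρ : IsClassB ρ) {q : ℝ≥0∞} (hq : 1 ≤ q)
    (hz : eKNorm i₀ i₁ ρ q z ≠ ∞) {δ : ℝ≥0∞} (hδ : δ ≠ 0) :
    ∃ a b, (∀ n, z = i₀ (a n) + i₁ (b n)) ∧ eLq q (kSeq ρ a b) ≤ eKNorm i₀ i₁ ρ q z + δ := by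
  obtain ⟨ε, hε, hεδ⟩ := ENNReal.exists_pos_sum_of_countable' hδ ℤ
  have hρ0 : ∀ n : ℤ, ENNReal.ofReal (ρ (2 ^ n)) ≠ 0 := fun n =>
    (ENNReal.ofReal_pos.2 (hρ.pos _ (by positivity))).ne'
  have hlt : ∀ n : ℤ, eKfun i₀ i₁ (2 ^ n) z <
      (eKfun i₀ i₁ (2 ^ n) z / ENNReal.ofReal (ρ (2 ^ n)) + ε n) * ENNReal.ofReal (ρ (2 ^ n)) := by
    intro n
    have hfin : eKfun i₀ i₁ (2 ^ n) z / ENNReal.ofReal (ρ (2 ^ n)) ≠ ∞ :=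
      ne_top_of_le_ne_top hz
        (le_eLq hq (fun n : ℤ => eKfun i₀ i₁ (2 ^ n) z / ENNReal.ofReal (ρ (2 ^ n))) n)
    rw [← ENNReal.div_lt_iff (Or.inl (hρ0 n)) (Or.inl ENNReal.ofReal_ne_top)]
    exact ENNReal.lt_add_right hfin (hε n).ne'
  choose a b hab hlt using fun n => exists_lt_of_eKfun_lt (by positivity) (hlt n)
  refine ⟨a, b, hab, ?_⟩
  calc eLq q (kSeq ρ a b)
      ≤ eLq q fun n => eKfun i₀ i₁ (2 ^ n) z / ENNReal.ofReal (ρ (2 ^ n)) + ε n :=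
        eLq_mono q fun n => ENNReal.div_le_of_le_mul (hlt n).le
    _ ≤ eKNorm i₀ i₁ ρ q z + eLq q ε := eLq_add_le hq _ _
    _ ≤ eKNorm i₀ i₁ ρ q z + δ := by gcongr; exact (eLq_le_tsum hq ε).trans hεδ.le

lemma isJRep_sub_of_decomposition {ρ : ℝ → ℝ} (hρ : IsClassBpm ρ) {q : ℝ≥0∞} (hq : 1 ≤ q)
    (hab : ∀ n, z = i₀ (a n) + i₁ (b n)) (hfin : eLq q (kSeq ρ a b) ≠ ∞)
    (hfin' : eLq q (jSeq ρ (fun n => a n - a (n - 1)) (fun n => b (n - 1) - b n)) ≠ ∞) :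
    IsJRep i₀ i₁ z (fun n => a n - a (n - 1)) (fun n => b (n - 1) - b n) := by
  have hκ := hρ.tsum_dyadicKernel_one_ne_top
  have hcompat : ∀ n, i₀ (a n - a (n - 1)) = i₁ (b (n - 1) - b n) := fun n => by
    rw [map_sub, map_sub, sub_eq_sub_iff_add_eq_add, ← hab n, add_comm, ← hab (n - 1)]
  have hresidue : ∀ N : ℕ, z - ∑ n ∈ Finset.Ioc (-(N : ℤ)) N, i₀ (a n - a (n - 1)) =
      i₀ (a (-N)) + i₁ (b N) := fun N => by
    simp only [map_sub, sum_Ioc_neg_sub fun n => i₀ (a n)]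
    rw [hab N]
    abel
  refine isJRep_of_tendsto tendsto_Ioc_neg_atTop hcompat ?_ ?_
  · refine ne_top_of_le_ne_top (ENNReal.mul_ne_top hκ hfin') ?_
    rw [← ENNReal.tsum_mul_right]
    exact ENNReal.tsum_le_tsum fun n =>
      (esumNorm_apply_le_dyadicKernel_mul_jSeq hρ.toIsClassB hcompat n).trans
        (by gcongr; exact le_eLq hq _ n)
  · have hκN : Tendsto (fun N : ℕ => (dyadicKernel ρ 1 1 (-N) + dyadicKernel ρ 1 1 N) *
        eLq q (kSeq ρ a b)) atTop (𝓝 0) := by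
      simpa using ENNReal.Tendsto.mul_const (tendsto_neg_add_natCast_of_tsum_ne_top hκ)
        (Or.inr hfin)
    refine tendsto_of_tendsto_of_tendsto_of_le_of_le tendsto_const_nhds hκN (fun _ => zero_le)
      fun N => ?_
    rw [hresidue, add_mul]
    refine (eKfun_add_apply_le i₀ i₁ zero_le_one _ _).trans ?_
    rw [ENNReal.ofReal_one, one_mul]
    gcongr
    · exact (enorm_left_le_dyadicKernel_mul_kSeq hρ.toIsClassB (by simp) a b).trans
        (by gcongr; exact le_eLq hq _ _)
    · exact (enorm_right_le_dyadicKernel_mul_kSeq hρ.toIsClassB (by simp) a b).trans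
        (by gcongr; exact le_eLq hq _ _)

lemma eJNorm_le_mul_eLq_kSeq {ρ : ℝ → ℝ} (hρ : IsClassBpm ρ) {q : ℝ≥0∞} (hq : 1 ≤ q)
    (hab : ∀ n, z = i₀ (a n) + i₁ (b n)) (hfin : eLq q (kSeq ρ a b) ≠ ∞) :
    eJNorm i₀ i₁ ρ q z ≤ (1 + 2 * ENNReal.ofReal (rbar ρ 2⁻¹)) * eLq q (kSeq ρ a b) := by
  have hJ : eLq q (jSeq ρ (fun n => a n - a (n - 1)) (fun n => b (n - 1) - b n)) ≤
      (1 + 2 * ENNReal.ofReal (rbar ρ 2⁻¹)) * eLq q (kSeq ρ a b) := by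
    refine (eLq_mono q (jSeq_sub_le hρ.toIsClassB a b)).trans ((eLq_add_le hq _ _).trans_eq ?_)
    have hshift : eLq q (fun n => kSeq ρ a b (n - 1)) = eLq q (kSeq ρ a b) :=
      eLq_comp_equiv q (Equiv.subRight 1) (kSeq ρ a b)
    rw [eLq_const_mul hq, hshift, add_mul, one_mul]
  have hrep := isJRep_sub_of_decomposition hρ hq hab hfin
    (ne_top_of_le_ne_top (by finiteness) hJ)
  rw [eJNorm_eq hρ.pos]
  exact iInf₂_le_of_le _ _ (iInf_le_of_le hrep hJ)

lemma eJNorm_le_mul_eKNorm {ρ : ℝ → ℝ} (hρ : IsClassBpm ρ) {q : ℝ≥0∞} (hq : 1 ≤ q) (z : V) :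
    eJNorm i₀ i₁ ρ q z ≤ (1 + 2 * ENNReal.ofReal (rbar ρ 2⁻¹)) * eKNorm i₀ i₁ ρ q z := by
  set C : ℝ≥0∞ := 1 + 2 * ENNReal.ofReal (rbar ρ 2⁻¹) with hC
  have hCtop : C ≠ ∞ := by finiteness
  have hC0 : C ≠ 0 := by simp [hC]
  refine ENNReal.le_of_forall_pos_le_add fun ε hε hfin => ?_
  have hz : eKNorm i₀ i₁ ρ q z ≠ ∞ := fun h => hfin.ne (by rw [h, ENNReal.mul_top hC0])
  obtain ⟨a, b, hab, hle⟩ := exists_decomposition_eLq_kSeq_le hρ.toIsClassB hq hz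
    (ENNReal.div_ne_zero.2 ⟨ENNReal.coe_ne_zero.2 hε.ne', hCtop⟩)
  have hK : eLq q (kSeq ρ a b) ≠ ∞ :=
    ne_top_of_le_ne_top (ENNReal.add_ne_top.2 ⟨hz, ENNReal.div_ne_top ENNReal.coe_ne_top hC0⟩) hle
  calc eJNorm i₀ i₁ ρ q z ≤ C * eLq q (kSeq ρ a b) := eJNorm_le_mul_eLq_kSeq hρ hq hab hK
    _ ≤ C * (eKNorm i₀ i₁ ρ q z + ε / C) := by gcongr
    _ = C * eKNorm i₀ i₁ ρ q z + ε := by rw [mul_add, ENNReal.mul_div_cancel hC0 hCtop]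

end Couple

/-! ### Bilinear operators on `J`-representations -/

/-- The parameter `γ(t) = 1 / ρ̄(t⁻¹)` paired with `ρ` in bilinear interpolation. -/
noncomputable def dualParam (ρ : ℝ → ℝ) (t : ℝ) : ℝ := (rbar ρ t⁻¹)⁻¹

lemma IsClassB.dualParam_pos {ρ : ℝ → ℝ} (hρ : IsClassB ρ) (t : ℝ) (ht : 0 < t) :
    0 < dualParam ρ t :=
  inv_pos.2 (hρ.rbar_pos (inv_pos.2 ht))

section Sequences

variable {E₀ E₁ : Type*} [NormedAddCommGroup E₀] [NormedAddCommGroup E₁] {w : ℝ → ℝ}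

lemma max_enorm_eq_mul_jSeq (hw : ∀ t > 0, 0 < w t) (a : ℤ → E₀) (b : ℤ → E₁) (n : ℤ) :
    max ‖a n‖ₑ (ENNReal.ofReal (2 ^ n) * ‖b n‖ₑ) = ENNReal.ofReal (w (2 ^ n)) * jSeq w a b n :=
  (ENNReal.mul_div_cancel (ENNReal.ofReal_pos.2 (hw _ (by positivity))).ne'
    ENNReal.ofReal_ne_top).symm

lemma enorm_left_le_mul_jSeq (hw : ∀ t > 0, 0 < w t) (a : ℤ → E₀) (b : ℤ → E₁) (n : ℤ) :
    ‖a n‖ₑ ≤ ENNReal.ofReal (w (2 ^ n)) * jSeq w a b n :=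
  (le_max_left _ _).trans_eq (max_enorm_eq_mul_jSeq hw a b n)

lemma enorm_right_le_mul_jSeq (hw : ∀ t > 0, 0 < w t) (a : ℤ → E₀) (b : ℤ → E₁) (n : ℤ) :
    ‖b n‖ₑ ≤ ENNReal.ofReal (2 ^ n)⁻¹ * (ENNReal.ofReal (w (2 ^ n)) * jSeq w a b n) := by
  rw [← max_enorm_eq_mul_jSeq hw]
  calc ‖b n‖ₑ = ENNReal.ofReal (2 ^ n)⁻¹ * (ENNReal.ofReal (2 ^ n) * ‖b n‖ₑ) :=
        (ofReal_inv_mul_ofReal_mul (by positivity) _).symm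
    _ ≤ _ := by gcongr; exact le_max_right _ _

end Sequences

section Bilinear

variable {E₀ E₁ F₀ F₁ G₀ G₁ VE VF VG : Type*}
  [NormedAddCommGroup E₀] [NormedSpace ℝ E₀] [NormedAddCommGroup E₁] [NormedSpace ℝ E₁]
  [NormedAddCommGroup F₀] [NormedSpace ℝ F₀] [NormedAddCommGroup F₁] [NormedSpace ℝ F₁]
  [NormedAddCommGroup G₀] [NormedSpace ℝ G₀] [NormedAddCommGroup G₁] [NormedSpace ℝ G₁]
  [AddCommGroup VE] [Module ℝ VE] [AddCommGroup VF] [Module ℝ VF] [AddCommGroup VG] [Module ℝ VG]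
  {iE₀ : E₀ →ₗ[ℝ] VE} {iE₁ : E₁ →ₗ[ℝ] VE} {iF₀ : F₀ →ₗ[ℝ] VF} {iF₁ : F₁ →ₗ[ℝ] VF}
  {iG₀ : G₀ →ₗ[ℝ] VG} {iG₁ : G₁ →ₗ[ℝ] VG} {T : VE →ₗ[ℝ] VF →ₗ[ℝ] VG}
  {x : VE} {y : VF} {a : ℤ → E₀} {b : ℤ → E₁} {a' : ℤ → F₀} {b' : ℤ → F₁}

lemma IsJRep.esumNorm_ne_top (h : IsJRep iE₀ iE₁ x a b) : esumNorm iE₀ iE₁ x ≠ ∞ := by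
  have hN := isESeminorm_esumNorm iE₀ iE₁
  obtain ⟨G, hG⟩ := ((isJRep_iff_tendsto.1 h).2.eventually_lt_const one_pos).exists
  refine ne_top_of_le_ne_top (ENNReal.add_ne_top.2 ⟨hG.ne_top, ENNReal.sum_ne_top.2 fun n _ => ?_⟩)
    ((hN.le_sub_add x (∑ n ∈ G, iE₀ (a n))).trans (by gcongr; exact hN.sum_le _ _))
  exact ne_top_of_le_ne_top enorm_ne_top
    ((eKfun_le_enormOf_left iE₀ iE₁ zero_le_one _).trans (enormOf_apply_le iE₀ (a n)))

lemma IsJRep.tendsto_esumNorm_bilinear_sub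
    (hT : eBilBdd (esumNorm iE₀ iE₁) (esumNorm iF₀ iF₁) (esumNorm iG₀ iG₁) fun x y => T x y)
    (hx : IsJRep iE₀ iE₁ x a b) (hy : IsJRep iF₀ iF₁ y a' b') :
    Tendsto (fun G : Finset ℤ => esumNorm iG₀ iG₁
      (T x y - ∑ n ∈ G ×ˢ G, T (iE₀ (a n.1)) (iF₀ (a' n.2)))) atTop (𝓝 0) := by
  obtain ⟨M, hM⟩ := hT
  have hN := isESeminorm_esumNorm iG₀ iG₁
  set dx := fun G : Finset ℤ => x - ∑ n ∈ G, iE₀ (a n)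
  set dy := fun G : Finset ℤ => y - ∑ n ∈ G, iF₀ (a' n)
  have hdx : Tendsto (fun G => esumNorm iE₀ iE₁ (dx G)) atTop (𝓝 0) := (isJRep_iff_tendsto.1 hx).2
  have hdy : Tendsto (fun G => esumNorm iF₀ iF₁ (dy G)) atTop (𝓝 0) := (isJRep_iff_tendsto.1 hy).2
  have hsplit : ∀ G : Finset ℤ, T x y - ∑ n ∈ G ×ˢ G, T (iE₀ (a n.1)) (iF₀ (a' n.2)) =
      T (dx G) y + T x (dy G) - T (dx G) (dy G) := fun G => by
    have hprod : ∑ n ∈ G ×ˢ G, T (iE₀ (a n.1)) (iF₀ (a' n.2)) =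
        T (∑ n ∈ G, iE₀ (a n)) (∑ n ∈ G, iF₀ (a' n)) := by
      simp only [Finset.sum_product_right, map_sum, LinearMap.sum_apply]
    rw [hprod]
    simp only [dx, dy, map_sub, LinearMap.sub_apply]
    abel
  have hbound : Tendsto (fun G => M * esumNorm iE₀ iE₁ (dx G) * esumNorm iF₀ iF₁ y +
      M * esumNorm iE₀ iE₁ x * esumNorm iF₀ iF₁ (dy G) +
      M * esumNorm iE₀ iE₁ (dx G) * esumNorm iF₀ iF₁ (dy G)) atTop (𝓝 0) := by
    have hMdx : Tendsto (fun G => M * esumNorm iE₀ iE₁ (dx G)) atTop (𝓝 0) := by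
      simpa using ENNReal.Tendsto.const_mul hdx (Or.inr (ENNReal.coe_ne_top (r := M)))
    have hleft := ENNReal.Tendsto.mul_const hMdx (Or.inr hy.esumNorm_ne_top)
    have hright := ENNReal.Tendsto.const_mul hdy
      (Or.inr (ENNReal.mul_ne_top (ENNReal.coe_ne_top (r := M)) hx.esumNorm_ne_top))
    have hboth := ENNReal.Tendsto.mul hMdx (Or.inr ENNReal.zero_ne_top) hdy
      (Or.inr ENNReal.zero_ne_top)
    simpa using (hleft.add hright).add hboth
  refine tendsto_of_tendsto_of_tendsto_of_le_of_le tendsto_const_nhds hbound (fun _ => zero_le)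
    fun G => ?_
  rw [hsplit]
  exact (hN.sub_le _ _).trans
    (add_le_add ((hN.add_le _ _).trans (add_le_add (hM _ _) (hM _ _))) (hM _ _))

lemma IsJRep.apply_bilinear_le_tsum
    (hT : eBilBdd (esumNorm iE₀ iE₁) (esumNorm iF₀ iF₁) (esumNorm iG₀ iG₁) fun x y => T x y)
    (hx : IsJRep iE₀ iE₁ x a b) (hy : IsJRep iF₀ iF₁ y a' b') {N : VG → ℝ≥0∞}
    (hN : IsESeminorm N) {C : ℝ≥0∞} (hC : C ≠ ∞) (hNC : ∀ z, N z ≤ C * esumNorm iG₀ iG₁ z) :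
    N (T x y) ≤ ∑' k, ∑' m, N (T (iE₀ (a k)) (iF₀ (a' m))) := by
  have hlim : Tendsto (fun G : Finset ℤ => C * esumNorm iG₀ iG₁
      (T x y - ∑ n ∈ G ×ˢ G, T (iE₀ (a n.1)) (iF₀ (a' n.2))) +
        ∑' k, ∑' m, N (T (iE₀ (a k)) (iF₀ (a' m)))) atTop
      (𝓝 (∑' k, ∑' m, N (T (iE₀ (a k)) (iF₀ (a' m))))) := by
    simpa using (ENNReal.Tendsto.const_mul (hx.tendsto_esumNorm_bilinear_sub hT hy)
      (Or.inr hC)).add_const _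
  refine ge_of_tendsto' hlim fun G => (hN.le_sub_add _
    (∑ n ∈ G ×ˢ G, T (iE₀ (a n.1)) (iF₀ (a' n.2)))).trans ?_
  refine add_le_add (hNC _) ((hN.sum_le _ _).trans ?_)
  rw [← ENNReal.tsum_prod]
  exact ENNReal.sum_le_tsum _

/-- The estimate `K(t, T(u, v)) ≤ min (c₀ ‖u‖₀ ‖v‖₀) (c₁ t ‖u‖₁ ‖v‖₁)` for `u ∈ E₀ ∩ E₁` and
`v ∈ F₀ ∩ F₁`, an element of an intersection being given by its two preimages. -/
def HasKBound (iE₀ : E₀ →ₗ[ℝ] VE) (iE₁ : E₁ →ₗ[ℝ] VE) (iF₀ : F₀ →ₗ[ℝ] VF) (iF₁ : F₁ →ₗ[ℝ] VF)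
    (iG₀ : G₀ →ₗ[ℝ] VG) (iG₁ : G₁ →ₗ[ℝ] VG) (T : VE →ₗ[ℝ] VF →ₗ[ℝ] VG) (c₀ c₁ : ℝ≥0∞)
    (t : ℝ) : Prop :=
  ∀ a b a' b', iE₀ a = iE₁ b → iF₀ a' = iF₁ b' → eKfun iG₀ iG₁ t (T (iE₀ a) (iF₀ a')) ≤
    min (c₀ * (‖a‖ₑ * ‖a'‖ₑ)) (c₁ * (ENNReal.ofReal t * (‖b‖ₑ * ‖b'‖ₑ)))

lemma IsClassB.ofReal_dualParam_mul_le {ρ : ℝ → ℝ} (hρ : IsClassB ρ) (k m n : ℤ) :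
    ENNReal.ofReal (dualParam ρ (2 ^ k)) * ENNReal.ofReal (ρ (2 ^ m)) ≤
      ENNReal.ofReal (rbar ρ (2 ^ (k + m - n))) * ENNReal.ofReal (ρ (2 ^ n)) := by
  have hpos : ∀ i : ℤ, (0 : ℝ) < 2 ^ i := fun i => by positivity
  rw [← ENNReal.ofReal_mul (hρ.dualParam_pos _ (hpos k)).le,
    ← ENNReal.ofReal_mul (hρ.rbar_pos (hpos _)).le, zpow_sub₀ two_ne_zero, zpow_add₀ two_ne_zero]
  exact ENNReal.ofReal_le_ofReal (hρ.inv_rbar_inv_mul_le (hpos k) (hpos m) (hpos n))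

lemma HasKBound.eKfun_div_le {ρ : ℝ → ℝ} (hρ : IsClassB ρ) {c₀ c₁ : ℝ≥0∞} {n : ℤ}
    (h : HasKBound iE₀ iE₁ iF₀ iF₁ iG₀ iG₁ T c₀ c₁ (2 ^ n))
    (hab : ∀ k, iE₀ (a k) = iE₁ (b k)) (hab' : ∀ m, iF₀ (a' m) = iF₁ (b' m)) (k m : ℤ) :
    eKfun iG₀ iG₁ (2 ^ n) (T (iE₀ (a k)) (iF₀ (a' m))) / ENNReal.ofReal (ρ (2 ^ n)) ≤
      dyadicKernel ρ c₀ c₁ (k + m - n) *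
        (jSeq (dualParam ρ) a b k * jSeq ρ a' b' m) := by
  set α := jSeq (dualParam ρ) a b k
  set β := jSeq ρ a' b' m
  set γk := ENNReal.ofReal (dualParam ρ (2 ^ k))
  set ρm := ENNReal.ofReal (ρ (2 ^ m))
  have hpow : ENNReal.ofReal (2 ^ n) * (ENNReal.ofReal (2 ^ k)⁻¹ * ENNReal.ofReal (2 ^ m)⁻¹) =
      ENNReal.ofReal (2 ^ (k + m - n))⁻¹ := by
    rw [← ENNReal.ofReal_mul (by positivity), ← ENNReal.ofReal_mul (by positivity),
      zpow_sub₀ two_ne_zero, zpow_add₀ two_ne_zero, inv_div, ← mul_inv, div_eq_mul_inv]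
  have hmin : eKfun iG₀ iG₁ (2 ^ n) (T (iE₀ (a k)) (iF₀ (a' m))) ≤
      min c₀ (c₁ * ENNReal.ofReal (2 ^ (k + m - n))⁻¹) * (γk * ρm * (α * β)) := by
    refine (h _ _ _ _ (hab k) (hab' m)).trans ?_
    rw [min_mul]
    refine min_le_min ?_ ?_
    · calc c₀ * (‖a k‖ₑ * ‖a' m‖ₑ) ≤ c₀ * ((γk * α) * (ρm * β)) := by
            gcongr
            · exact enorm_left_le_mul_jSeq hρ.dualParam_pos a b k
            · exact enorm_left_le_mul_jSeq hρ.pos a' b' m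
        _ = _ := by ring
    · calc c₁ * (ENNReal.ofReal (2 ^ n) * (‖b k‖ₑ * ‖b' m‖ₑ))
          ≤ c₁ * (ENNReal.ofReal (2 ^ n) * ((ENNReal.ofReal (2 ^ k)⁻¹ * (γk * α)) *
              (ENNReal.ofReal (2 ^ m)⁻¹ * (ρm * β)))) := by
            gcongr
            · exact enorm_right_le_mul_jSeq hρ.dualParam_pos a b k
            · exact enorm_right_le_mul_jSeq hρ.pos a' b' m
        _ = _ := by rw [← hpow]; ring
  refine ENNReal.div_le_of_le_mul (hmin.trans ?_)
  calc _ ≤ _ := mul_le_mul_right (mul_le_mul_left (hρ.ofReal_dualParam_mul_le k m n) _) _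
    _ = _ := by rw [dyadicKernel]; ring

lemma eLq_indicator_eKfun_bilinear_le {ρ : ℝ → ℝ} (hρ : IsClassB ρ) {p q r : ℝ≥0∞}
    (hp : 1 ≤ p) (hq : 1 ≤ q) (hr : 1 ≤ r) (hpqr : 1 / r + 1 = 1 / p + 1 / q)
    (hT : eBilBdd (esumNorm iE₀ iE₁) (esumNorm iF₀ iF₁) (esumNorm iG₀ iG₁) fun x y => T x y)
    {S : Set ℤ} {c₀ c₁ : ℝ≥0∞}
    (hS : ∀ n ∈ S, HasKBound iE₀ iE₁ iF₀ iF₁ iG₀ iG₁ T c₀ c₁ (2 ^ n)) {A B : ℝ≥0∞}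
    (hx : eJNorm iE₀ iE₁ (dualParam ρ) p x < A) (hy : eJNorm iF₀ iF₁ ρ q y < B) :
    eLq r (S.indicator fun n => eKfun iG₀ iG₁ (2 ^ n) (T x y) / ENNReal.ofReal (ρ (2 ^ n))) ≤
      (∑' i, dyadicKernel ρ c₀ c₁ i) * (A * B) := by
  obtain ⟨a, b, hab, hα⟩ := exists_isJRep_of_eJNorm_lt hρ.dualParam_pos hx
  obtain ⟨a', b', hab', hβ⟩ := exists_isJRep_of_eJNorm_lt hρ.pos hy
  set α := jSeq (dualParam ρ) a b
  set β := jSeq ρ a' b'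
  have hpoint : ∀ n ∈ S, eKfun iG₀ iG₁ (2 ^ n) (T x y) / ENNReal.ofReal (ρ (2 ^ n)) ≤
      eConv (fun i => dyadicKernel ρ c₀ c₁ (-i)) (eConv α β) n := by
    intro n hn
    have hle := hab.apply_bilinear_le_tsum hT hab' (isESeminorm_eKfun iG₀ iG₁ (by positivity))
      ENNReal.ofReal_ne_top (eKfun_le_max_mul_esumNorm iG₀ iG₁ (t := 2 ^ n) (by positivity))
    refine (ENNReal.div_le_div_right hle _).trans ?_
    simp only [div_eq_mul_inv, ← ENNReal.tsum_mul_right]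
    simp only [← div_eq_mul_inv]
    calc _ ≤ ∑' k, ∑' m, dyadicKernel ρ c₀ c₁ (k + m - n) * (α k * β m) :=
          ENNReal.tsum_le_tsum fun k => ENNReal.tsum_le_tsum fun m =>
            (hS n hn).eKfun_div_le hρ hab.1 hab'.1 k m
      _ = ∑' j, dyadicKernel ρ c₀ c₁ (j - n) * eConv α β j :=
          tsum_tsum_add_mul (fun j => dyadicKernel ρ c₀ c₁ (j - n)) α β
      _ = _ := by
          rw [eConv_comm _ (eConv α β), eConv.eq_def (eConv α β)]
          simp only [neg_sub, mul_comm]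
  have hreflect : ∑' i, dyadicKernel ρ c₀ c₁ (-i) = ∑' i, dyadicKernel ρ c₀ c₁ i :=
    (Equiv.neg ℤ).tsum_eq _
  calc _ ≤ eLq r (eConv (fun i => dyadicKernel ρ c₀ c₁ (-i)) (eConv α β)) :=
        eLq_mono r fun n => indicator_le hpoint n
    _ ≤ (∑' i, dyadicKernel ρ c₀ c₁ i) * eLq r (eConv α β) :=
        hreflect ▸ eLq_eConv_le_tsum_mul hr _ _
    _ ≤ (∑' i, dyadicKernel ρ c₀ c₁ i) * (A * B) := by
        gcongr
        exact (eLq_eConv_le hp hq hr hpqr α β).trans (by gcongr)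

end Bilinear

/-! ### Compactness on the endpoint spaces -/

lemma enorm_norm_inv_smul_le_one {E : Type*} [NormedAddCommGroup E] [NormedSpace ℝ E] (e : E) :
    ‖‖e‖⁻¹ • e‖ₑ ≤ 1 := by
  rw [← ofReal_norm, norm_smul, norm_inv, norm_norm, ENNReal.ofReal_le_one]
  exact inv_mul_le_one

section Endpoint

variable {E F VE VF VG : Type*} [NormedAddCommGroup E] [NormedSpace ℝ E]
  [NormedAddCommGroup F] [NormedSpace ℝ F] [AddCommGroup VE] [Module ℝ VE]
  [AddCommGroup VF] [Module ℝ VF] [AddCommGroup VG] [Module ℝ VG]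
  (T : VE →ₗ[ℝ] VF →ₗ[ℝ] VG) (i : E →ₗ[ℝ] VE) (j : F →ₗ[ℝ] VF)

/-- The image under `T` of the product of the unit balls of `E` and `F`. -/
def bilinearBallImage : Set VG :=
  image2 (fun x y => T x y) {x | enormOf i x ≤ 1} {y | enormOf j y ≤ 1}

lemma zero_mem_bilinearBallImage : (0 : VG) ∈ bilinearBallImage T i j :=
  ⟨0, by simp [(isESeminorm_enormOf i).map_zero], 0, by simp [(isESeminorm_enormOf j).map_zero],
    by simp⟩

lemma bilinear_normalize_mem_bilinearBallImage (e : E) (f : F) :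
    T (i (‖e‖⁻¹ • e)) (j (‖f‖⁻¹ • f)) ∈ bilinearBallImage T i j :=
  mem_image2_of_mem ((enormOf_apply_le i _).trans (enorm_norm_inv_smul_le_one e))
    ((enormOf_apply_le j _).trans (enorm_norm_inv_smul_le_one f))

lemma bilinear_eq_norm_mul_norm_smul (e : E) (f : F) :
    T (i e) (j f) = (‖e‖ * ‖f‖) • T (i (‖e‖⁻¹ • e)) (j (‖f‖⁻¹ • f)) := by
  rcases eq_or_ne e 0 with rfl | he
  · simp
  rcases eq_or_ne f 0 with rfl | hf
  · simp
  simp only [map_smul, LinearMap.smul_apply, smul_smul]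
  rw [show ‖e‖ * ‖f‖ * (‖f‖⁻¹ * ‖e‖⁻¹) = 1 by
    have := norm_ne_zero_iff.2 he; have := norm_ne_zero_iff.2 hf; field_simp, one_smul]

lemma sum_bilinear_mem_smul_convexHull {κ : Type*} (P : Finset κ) (e : κ → E) (f : κ → F) {L : ℝ}
    (hL : 0 < L) (h : ∑ x ∈ P, ‖e x‖ₑ * ‖f x‖ₑ ≤ ENNReal.ofReal L) :
    ∑ x ∈ P, T (i (e x)) (j (f x)) ∈ (L • ·) '' convexHull ℝ (bilinearBallImage T i j) := by
  rw [Finset.sum_congr rfl fun x _ => bilinear_eq_norm_mul_norm_smul T i j (e x) (f x)]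
  refine sum_smul_mem_smul_convexHull (zero_mem_bilinearBallImage T i j) P
    (fun x _ => by positivity) (fun x _ => bilinear_normalize_mem_bilinearBallImage T i j _ _)
    ((ENNReal.ofReal_le_ofReal_iff hL.le).1 ?_) hL
  rw [ENNReal.ofReal_sum_of_nonneg fun x _ => by positivity]
  simpa only [ENNReal.ofReal_mul (norm_nonneg _), ofReal_norm] using h

variable {T i j}

lemma eventually_bilinear_le {N N' : VG → ℝ≥0∞} (hN : IsESeminorm N) (hN' : IsESeminorm N')
    (hc : eBilCompact (enormOf i) (enormOf j) N fun x y => T x y) {ι : Type*} {l : Filter ι}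
    {K : ι → VG → ℝ≥0∞} (hK : ∀ n, IsESeminorm (K n)) (hKN : ∀ n z, K n z ≤ N z)
    (hlim : ∀ z, N' z ≠ ∞ → Tendsto (K · z) l (𝓝 0)) {ε : ℝ≥0∞} (hε : ε ≠ 0) :
    ∀ᶠ n in l, ∀ e f, N' (T (i e) (j f)) ≠ ∞ → K n (T (i e) (j f)) ≤ ε * (‖e‖ₑ * ‖f‖ₑ) := by
  have hS : ETotallyBounded N (bilinearBallImage T i j ∩ {z | N' z ≠ ∞}) :=
    (eBilCompact_iff.1 hc).mono inter_subset_left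
  filter_upwards [hS.eventually_le hN hK hKN (fun z hz => hlim z hz.2) hε] with n hn e f hfin
  set z := T (i (‖e‖⁻¹ • e)) (j (‖f‖⁻¹ • f)) with hz
  have hz' : N' z ≠ ∞ := by
    rw [hz]
    simp only [map_smul, LinearMap.smul_apply, smul_smul]
    exact ne_top_of_le_ne_top (ENNReal.mul_ne_top enorm_ne_top hfin) (hN'.smul_le _ _)
  calc K n (T (i e) (j f)) = K n ((‖e‖ * ‖f‖) • z) := by
        rw [bilinear_eq_norm_mul_norm_smul T i j e f]
    _ ≤ ‖‖e‖ * ‖f‖‖ₑ * K n z := (hK n).smul_le _ _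
    _ ≤ ‖‖e‖ * ‖f‖‖ₑ * ε := by
        gcongr
        exact hn z ⟨bilinear_normalize_mem_bilinearBallImage T i j e f, hz'⟩
    _ = ε * (‖e‖ₑ * ‖f‖ₑ) := by rw [enorm_mul, enorm_norm, enorm_norm, mul_comm]

end Endpoint

lemma tendsto_ofReal_two_zpow_atBot :
    Tendsto (fun n : ℤ => ENNReal.ofReal (2 ^ n)) atBot (𝓝 0) := by
  have h := (tendsto_rpow_atBot_of_base_gt_one 2 one_lt_two).comp
    (tendsto_intCast_atBot_iff.2 (tendsto_id (α := ℤ)))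
  simpa [Function.comp_def] using ENNReal.tendsto_ofReal h

lemma tendsto_ofReal_two_zpow_inv_atTop :
    Tendsto (fun n : ℤ => ENNReal.ofReal (2 ^ n)⁻¹) atTop (𝓝 0) := by
  simpa [Function.comp_def] using tendsto_ofReal_two_zpow_atBot.comp tendsto_neg_atTop_atBot

section EndpointBounds

variable {E₀ E₁ F₀ F₁ G₀ G₁ VE VF VG : Type*}
  [NormedAddCommGroup E₀] [NormedSpace ℝ E₀] [NormedAddCommGroup E₁] [NormedSpace ℝ E₁]
  [NormedAddCommGroup F₀] [NormedSpace ℝ F₀] [NormedAddCommGroup F₁] [NormedSpace ℝ F₁]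
  [NormedAddCommGroup G₀] [NormedSpace ℝ G₀] [NormedAddCommGroup G₁] [NormedSpace ℝ G₁]
  [AddCommGroup VE] [Module ℝ VE] [AddCommGroup VF] [Module ℝ VF] [AddCommGroup VG] [Module ℝ VG]
  {iE₀ : E₀ →ₗ[ℝ] VE} {iE₁ : E₁ →ₗ[ℝ] VE} {iF₀ : F₀ →ₗ[ℝ] VF} {iF₁ : F₁ →ₗ[ℝ] VF}
  {iG₀ : G₀ →ₗ[ℝ] VG} {iG₁ : G₁ →ₗ[ℝ] VG} {T : VE →ₗ[ℝ] VF →ₗ[ℝ] VG}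

lemma exists_enormOf_bilinear_le
    (hb : eBilBdd (enormOf iE₀) (enormOf iF₀) (enormOf iG₀) fun x y => T x y) :
    ∃ M ≠ ∞, ∀ a a', enormOf iG₀ (T (iE₀ a) (iF₀ a')) ≤ M * (‖a‖ₑ * ‖a'‖ₑ) := by
  obtain ⟨M, hM⟩ := hb
  refine ⟨M, ENNReal.coe_ne_top, fun a a' => (hM _ _).trans ?_⟩
  rw [mul_assoc]
  gcongr <;> exact enormOf_apply_le _ _

lemma exists_hasKBound
    (hb₀ : eBilBdd (enormOf iE₀) (enormOf iF₀) (enormOf iG₀) fun x y => T x y)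
    (hb₁ : eBilBdd (enormOf iE₁) (enormOf iF₁) (enormOf iG₁) fun x y => T x y) :
    ∃ M ≠ ∞, ∀ t > 0, HasKBound iE₀ iE₁ iF₀ iF₁ iG₀ iG₁ T M M t := by
  obtain ⟨M₀, hM₀, h₀⟩ := exists_enormOf_bilinear_le hb₀
  obtain ⟨M₁, hM₁, h₁⟩ := exists_enormOf_bilinear_le hb₁
  refine ⟨max M₀ M₁, max_ne_top hM₀ hM₁, fun t ht a b a' b' hab hab' => le_min ?_ ?_⟩
  · calc _ ≤ enormOf iG₀ (T (iE₀ a) (iF₀ a')) := eKfun_le_enormOf_left iG₀ iG₁ ht.le _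
      _ ≤ M₀ * (‖a‖ₑ * ‖a'‖ₑ) := h₀ a a'
      _ ≤ _ := by gcongr; exact le_max_left _ _
  · rw [hab, hab']
    calc _ ≤ ENNReal.ofReal t * enormOf iG₁ (T (iE₁ b) (iF₁ b')) :=
          eKfun_le_enormOf_right iG₀ iG₁ ht _
      _ ≤ ENNReal.ofReal t * (M₁ * (‖b‖ₑ * ‖b'‖ₑ)) := by gcongr; exact h₁ b b'
      _ = M₁ * (ENNReal.ofReal t * (‖b‖ₑ * ‖b'‖ₑ)) := mul_left_comm _ _ _
      _ ≤ _ := by gcongr; exact le_max_right _ _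

lemma eventually_hasKBound_atBot
    (hc₀ : eBilCompact (enormOf iE₀) (enormOf iF₀) (enormOf iG₀) fun x y => T x y)
    (hb₁ : eBilBdd (enormOf iE₁) (enormOf iF₁) (enormOf iG₁) fun x y => T x y) {M₀ M₁ : ℝ≥0∞}
    (hM : ∀ t > 0, HasKBound iE₀ iE₁ iF₀ iF₁ iG₀ iG₁ T M₀ M₁ t) {ε : ℝ≥0∞} (hε : ε ≠ 0) :
    ∀ᶠ n : ℤ in atBot, HasKBound iE₀ iE₁ iF₀ iF₁ iG₀ iG₁ T ε M₁ (2 ^ n) := by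
  obtain ⟨C, hC, hCle⟩ := exists_enormOf_bilinear_le hb₁
  have hlim : ∀ z, enormOf iG₁ z ≠ ∞ →
      Tendsto (fun n : ℤ => eKfun iG₀ iG₁ (2 ^ n) z) atBot (𝓝 0) := fun z hz => by
    have h := ENNReal.Tendsto.mul_const tendsto_ofReal_two_zpow_atBot (Or.inr hz)
    rw [zero_mul] at h
    exact tendsto_of_tendsto_of_tendsto_of_le_of_le tendsto_const_nhds h (fun _ => zero_le)
      fun n => eKfun_le_enormOf_right iG₀ iG₁ (by positivity) z
  filter_upwards [eventually_bilinear_le (isESeminorm_enormOf iG₀) (isESeminorm_enormOf iG₁) hc₀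
    (fun n : ℤ => isESeminorm_eKfun iG₀ iG₁ (t := 2 ^ n) (by positivity))
    (fun n z => eKfun_le_enormOf_left iG₀ iG₁ (by positivity) z) hlim hε]
    with n hn a b a' b' hab hab'
  refine le_min (hn a a' ?_) ((hM _ (by positivity) a b a' b' hab hab').trans (min_le_right _ _))
  rw [hab, hab']
  exact ne_top_of_le_ne_top (by finiteness) (hCle b b')

lemma eventually_hasKBound_atTop
    (hb₀ : eBilBdd (enormOf iE₀) (enormOf iF₀) (enormOf iG₀) fun x y => T x y)
    (hc₁ : eBilCompact (enormOf iE₁) (enormOf iF₁) (enormOf iG₁) fun x y => T x y) {M₀ M₁ : ℝ≥0∞}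
    (hM : ∀ t > 0, HasKBound iE₀ iE₁ iF₀ iF₁ iG₀ iG₁ T M₀ M₁ t) {ε : ℝ≥0∞} (hε : ε ≠ 0) :
    ∀ᶠ n : ℤ in atTop, HasKBound iE₀ iE₁ iF₀ iF₁ iG₀ iG₁ T M₀ ε (2 ^ n) := by
  obtain ⟨C, hC, hCle⟩ := exists_enormOf_bilinear_le hb₀
  set K := fun (n : ℤ) z => ENNReal.ofReal (2 ^ n)⁻¹ * eKfun iG₀ iG₁ (2 ^ n) z
  have hK : ∀ n, IsESeminorm (K n) := fun n =>
    (isESeminorm_eKfun iG₀ iG₁ (by positivity)).const_mul _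
  have hKle : ∀ n z, K n z ≤ enormOf iG₁ z := fun n z => by
    rw [← ofReal_inv_mul_ofReal_mul (t := 2 ^ n) (by positivity) (enormOf iG₁ z)]
    exact mul_le_mul_right (eKfun_le_enormOf_right iG₀ iG₁ (by positivity) z) _
  have hlim : ∀ z, enormOf iG₀ z ≠ ∞ → Tendsto (K · z) atTop (𝓝 0) := fun z hz => by
    have h := ENNReal.Tendsto.mul_const tendsto_ofReal_two_zpow_inv_atTop (Or.inr hz)
    rw [zero_mul] at h
    exact tendsto_of_tendsto_of_tendsto_of_le_of_le tendsto_const_nhds h (fun _ => zero_le)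
      fun n => mul_le_mul_right (eKfun_le_enormOf_left iG₀ iG₁ (by positivity) z) _
  filter_upwards [eventually_bilinear_le (isESeminorm_enormOf iG₁) (isESeminorm_enormOf iG₀) hc₁
    hK hKle hlim hε] with n hn a b a' b' hab hab'
  refine le_min ((hM _ (by positivity) a b a' b' hab hab').trans (min_le_left _ _)) ?_
  have hfin : enormOf iG₀ (T (iE₁ b) (iF₁ b')) ≠ ∞ := by
    rw [← hab, ← hab']
    exact ne_top_of_le_ne_top (by finiteness) (hCle a a')
  rw [hab, hab']
  calc eKfun iG₀ iG₁ (2 ^ n) (T (iE₁ b) (iF₁ b'))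
      = ENNReal.ofReal (2 ^ n) * K n (T (iE₁ b) (iF₁ b')) := by
        simpa [K] using (ofReal_inv_mul_ofReal_mul (t := (2 ^ n)⁻¹) (by positivity) _).symm
    _ ≤ ENNReal.ofReal (2 ^ n) * (ε * (‖b‖ₑ * ‖b'‖ₑ)) := by gcongr; exact hn b b' hfin
    _ = _ := mul_left_comm _ _ _

end EndpointBounds

/-! ### Compactness into the sum space and on the interpolation spaces -/

lemma sum_add_mul_le {p q r : ℝ≥0∞} (hp : 1 ≤ p) (hq : 1 ≤ q) (hr : 1 ≤ r)
    (hpqr : 1 / r + 1 = 1 / p + 1 / q) (f α β : ℤ → ℝ≥0∞) (P : Finset (ℤ × ℤ)) :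
    ∑ x ∈ P, f (x.1 + x.2) * (α x.1 * β x.2) ≤ (∑' j, f j) * (eLq p α * eLq q β) := by
  calc ∑ x ∈ P, f (x.1 + x.2) * (α x.1 * β x.2)
      ≤ ∑' k, ∑' m, f (k + m) * (α k * β m) := by
        rw [← ENNReal.tsum_prod]
        exact ENNReal.sum_le_tsum P
    _ = ∑' j, f j * eConv α β j := tsum_tsum_add_mul f α β
    _ ≤ ∑' j, f j * (eLq p α * eLq q β) := ENNReal.tsum_le_tsum fun j => by
        gcongr
        exact (le_eLq hr _ j).trans (eLq_eConv_le hp hq hr hpqr α β)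
    _ = _ := ENNReal.tsum_mul_right

lemma sum_indicator_add_mul_le {p q r : ℝ≥0∞} (hp : 1 ≤ p) (hq : 1 ≤ q) (hr : 1 ≤ r)
    (hpqr : 1 / r + 1 = 1 / p + 1 / q) (f α β : ℤ → ℝ≥0∞) {P : Finset (ℤ × ℤ)} {S : Set ℤ}
    (hP : ∀ x ∈ P, x.1 + x.2 ∈ S) {A B : ℝ≥0∞} (hα : eLq p α ≤ A) (hβ : eLq q β ≤ B) :
    ∑ x ∈ P, f (x.1 + x.2) * (α x.1 * β x.2) ≤ (∑' j : S, f j) * (A * B) := by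
  rw [tsum_subtype]
  calc _ = ∑ x ∈ P, S.indicator f (x.1 + x.2) * (α x.1 * β x.2) :=
        Finset.sum_congr rfl fun x hx => by rw [indicator_of_mem (hP x hx)]
    _ ≤ _ := sum_add_mul_le hp hq hr hpqr _ α β P
    _ ≤ _ := by gcongr

lemma sum_enorm_mul_enorm_le {E₀ E₁ F₀ F₁ : Type*} [NormedAddCommGroup E₀]
    [NormedAddCommGroup E₁] [NormedAddCommGroup F₀] [NormedAddCommGroup F₁] {ρ : ℝ → ℝ}
    (hρ : IsClassB ρ) {p q r A B : ℝ≥0∞} (hp : 1 ≤ p) (hq : 1 ≤ q) (hr : 1 ≤ r)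
    (hpqr : 1 / r + 1 = 1 / p + 1 / q) {a : ℤ → E₀} {b : ℤ → E₁} {a' : ℤ → F₀} {b' : ℤ → F₁}
    {P : Finset (ℤ × ℤ)} {I : Finset ℤ}
    (hP : ∀ x ∈ P, x.1 + x.2 ∈ (I : Set ℤ)) (hα : eLq p (jSeq (dualParam ρ) a b) ≤ A)
    (hβ : eLq q (jSeq ρ a' b') ≤ B) :
    ∑ x ∈ P, ‖a x.1‖ₑ * ‖a' x.2‖ₑ ≤ (∑ j ∈ I, ENNReal.ofReal (rbar ρ (2 ^ j))) * (A * B) := by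
  rw [← Finset.tsum_subtype' I]
  refine le_trans (Finset.sum_le_sum fun x _ => ?_) (sum_indicator_add_mul_le hp hq hr hpqr
    (fun j => ENNReal.ofReal (rbar ρ (2 ^ j))) _ _ hP hα hβ)
  have hweight := hρ.ofReal_dualParam_mul_le x.1 x.2 0
  rw [sub_zero, zpow_zero, hρ.one, ENNReal.ofReal_one, mul_one] at hweight
  calc ‖a x.1‖ₑ * ‖a' x.2‖ₑ
      ≤ (ENNReal.ofReal (dualParam ρ (2 ^ x.1)) * jSeq (dualParam ρ) a b x.1) *
          (ENNReal.ofReal (ρ (2 ^ x.2)) * jSeq ρ a' b' x.2) := by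
        gcongr
        · exact enorm_left_le_mul_jSeq hρ.dualParam_pos a b _
        · exact enorm_left_le_mul_jSeq hρ.pos a' b' _
    _ = ENNReal.ofReal (dualParam ρ (2 ^ x.1)) * ENNReal.ofReal (ρ (2 ^ x.2)) *
          (jSeq (dualParam ρ) a b x.1 * jSeq ρ a' b' x.2) := mul_mul_mul_comm _ _ _ _
    _ ≤ _ := by gcongr

section Compactness

variable {E₀ E₁ F₀ F₁ G₀ G₁ VE VF VG : Type*}
  [NormedAddCommGroup E₀] [NormedSpace ℝ E₀] [NormedAddCommGroup E₁] [NormedSpace ℝ E₁]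
  [NormedAddCommGroup F₀] [NormedSpace ℝ F₀] [NormedAddCommGroup F₁] [NormedSpace ℝ F₁]
  [NormedAddCommGroup G₀] [NormedSpace ℝ G₀] [NormedAddCommGroup G₁] [NormedSpace ℝ G₁]
  [AddCommGroup VE] [Module ℝ VE] [AddCommGroup VF] [Module ℝ VF] [AddCommGroup VG] [Module ℝ VG]
  {iE₀ : E₀ →ₗ[ℝ] VE} {iE₁ : E₁ →ₗ[ℝ] VE} {iF₀ : F₀ →ₗ[ℝ] VF} {iF₁ : F₁ →ₗ[ℝ] VF}
  {iG₀ : G₀ →ₗ[ℝ] VG} {iG₁ : G₁ →ₗ[ℝ] VG} {T : VE →ₗ[ℝ] VF →ₗ[ℝ] VG}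
  {ρ : ℝ → ℝ} {p q r M A B : ℝ≥0∞}
  {x : VE} {y : VF} {a : ℤ → E₀} {b : ℤ → E₁} {a' : ℤ → F₀} {b' : ℤ → F₁}

lemma esumNorm_sum_bilinear_le (hρ : IsClassB ρ) (hp : 1 ≤ p) (hq : 1 ≤ q) (hr : 1 ≤ r)
    (hpqr : 1 / r + 1 = 1 / p + 1 / q)
    (hM : HasKBound iE₀ iE₁ iF₀ iF₁ iG₀ iG₁ T M M 1)
    (hab : ∀ k, iE₀ (a k) = iE₁ (b k)) (hab' : ∀ m, iF₀ (a' m) = iF₁ (b' m))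
    {P : Finset (ℤ × ℤ)} {S : Set ℤ} (hP : ∀ x ∈ P, x.1 + x.2 ∈ S)
    (hα : eLq p (jSeq (dualParam ρ) a b) ≤ A) (hβ : eLq q (jSeq ρ a' b') ≤ B) :
    esumNorm iG₀ iG₁ (∑ x ∈ P, T (iE₀ (a x.1)) (iF₀ (a' x.2))) ≤
      (∑' j : S, dyadicKernel ρ M M j) * (A * B) := by
  refine ((isESeminorm_esumNorm iG₀ iG₁).sum_le _ _).trans ((Finset.sum_le_sum fun x _ => ?_).trans
    (sum_indicator_add_mul_le hp hq hr hpqr (dyadicKernel ρ M M) _ _ hP hα hβ))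
  rw [← zpow_zero (2 : ℝ)] at hM
  simpa [esumNorm, hρ.one] using hM.eKfun_div_le hρ hab hab' x.1 x.2

lemma exists_mem_smul_convexHull_esumNorm_sub_le (hρ : IsClassB ρ) (hp : 1 ≤ p) (hq : 1 ≤ q)
    (hr : 1 ≤ r) (hpqr : 1 / r + 1 = 1 / p + 1 / q)
    (hT : eBilBdd (esumNorm iE₀ iE₁) (esumNorm iF₀ iF₁) (esumNorm iG₀ iG₁) fun x y => T x y)
    (hM : HasKBound iE₀ iE₁ iF₀ iF₁ iG₀ iG₁ T M M 1)
    (hx : eJNorm iE₀ iE₁ (dualParam ρ) p x < A) (hy : eJNorm iF₀ iF₁ ρ q y < B)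
    {I : Finset ℤ} {L : ℝ} (hL : 0 < L)
    (hIL : (∑ j ∈ I, ENNReal.ofReal (rbar ρ (2 ^ j))) * (A * B) ≤ ENNReal.ofReal L)
    {δ : ℝ≥0∞} (hδ : δ ≠ 0) :
    ∃ z ∈ (L • ·) '' convexHull ℝ (bilinearBallImage T iE₀ iF₀), esumNorm iG₀ iG₁ (T x y - z) ≤
      δ + (∑' j : {j // j ∉ I}, dyadicKernel ρ M M j) * (A * B) := by
  obtain ⟨a, b, hab, hα⟩ := exists_isJRep_of_eJNorm_lt hρ.dualParam_pos hx
  obtain ⟨a', b', hab', hβ⟩ := exists_isJRep_of_eJNorm_lt hρ.pos hy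
  obtain ⟨G, hG⟩ := ((hab.tendsto_esumNorm_bilinear_sub hT hab').eventually_le_const
    (pos_iff_ne_zero.2 hδ)).exists
  set P := (G ×ˢ G).filter fun x => x.1 + x.2 ∈ I
  set Q := (G ×ˢ G).filter fun x => x.1 + x.2 ∉ I
  have hPQ : ∑ x ∈ G ×ˢ G, T (iE₀ (a x.1)) (iF₀ (a' x.2)) -
      ∑ x ∈ P, T (iE₀ (a x.1)) (iF₀ (a' x.2)) = ∑ x ∈ Q, T (iE₀ (a x.1)) (iF₀ (a' x.2)) :=
    sub_eq_of_eq_add' (Finset.sum_filter_add_sum_filter_not _ _ _).symm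
  refine ⟨∑ x ∈ P, T (iE₀ (a x.1)) (iF₀ (a' x.2)),
    sum_bilinear_mem_smul_convexHull T iE₀ iF₀ P _ _ hL (hIL.trans' ?_),
    ((isESeminorm_esumNorm iG₀ iG₁).sub_le_add _ _ _).trans (add_le_add hG ?_)⟩
  · exact sum_enorm_mul_enorm_le hρ hp hq hr hpqr (fun x hx => (Finset.mem_filter.1 hx).2)
      hα.le hβ.le
  · rw [hPQ]
    exact esumNorm_sum_bilinear_le hρ hp hq hr hpqr hM hab.1 hab'.1 (S := {j | j ∉ I})
      (fun x hx => (Finset.mem_filter.1 hx).2) hα.le hβ.le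

lemma eTotallyBounded_esumNorm_convexHull_bilinearBallImage
    (hb₀ : eBilBdd (enormOf iE₀) (enormOf iF₀) (enormOf iG₀) fun x y => T x y)
    (hc₀ : eBilCompact (enormOf iE₀) (enormOf iF₀) (enormOf iG₀) fun x y => T x y) :
    ETotallyBounded (esumNorm iG₀ iG₁) (convexHull ℝ (bilinearBallImage T iE₀ iF₀)) := by
  obtain ⟨C, hC⟩ := hb₀
  have hfin : ∀ z ∈ bilinearBallImage T iE₀ iF₀, enormOf iG₀ z ≠ ∞ := by
    rintro _ ⟨x, hx, y, hy, rfl⟩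
    refine ne_top_of_le_ne_top (ENNReal.coe_ne_top (r := C)) ((hC x y).trans ?_)
    calc C * enormOf iE₀ x * enormOf iF₀ y ≤ C * 1 * 1 := by gcongr <;> assumption
      _ = C := by simp
  refine (ETotallyBounded.convexHull (isESeminorm_enormOf iG₀) (eBilCompact_iff.1 hc₀)
    hfin).of_le_mul ENNReal.one_ne_top fun z => ?_
  rw [one_mul]
  exact eKfun_le_enormOf_left iG₀ iG₁ zero_le_one z

lemma eTotallyBounded_esumNorm_image2 (hρ : IsClassBpm ρ) (hp : 1 ≤ p) (hq : 1 ≤ q)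
    (hr : 1 ≤ r) (hpqr : 1 / r + 1 = 1 / p + 1 / q)
    (hT : eBilBdd (esumNorm iE₀ iE₁) (esumNorm iF₀ iF₁) (esumNorm iG₀ iG₁) fun x y => T x y)
    (hMtop : M ≠ ∞) (hM : HasKBound iE₀ iE₁ iF₀ iF₁ iG₀ iG₁ T M M 1)
    (hb₀ : eBilBdd (enormOf iE₀) (enormOf iF₀) (enormOf iG₀) fun x y => T x y)
    (hc₀ : eBilCompact (enormOf iE₀) (enormOf iF₀) (enormOf iG₀) fun x y => T x y)
    (hA : A ≠ ∞) (hB : B ≠ ∞) :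
    ETotallyBounded (esumNorm iG₀ iG₁) (image2 (fun x y => T x y)
      {x | eJNorm iE₀ iE₁ (dualParam ρ) p x < A} {y | eJNorm iF₀ iF₁ ρ q y < B}) := by
  have hN := isESeminorm_esumNorm iG₀ iG₁
  have hhull := eTotallyBounded_esumNorm_convexHull_bilinearBallImage (iG₁ := iG₁) hb₀ hc₀
  have htail := ENNReal.Tendsto.mul_const (b := A * B) (ENNReal.tendsto_tsum_compl_atTop_zero
    (hρ.tsum_dyadicKernel_ne_top hMtop hMtop)) (Or.inr (ENNReal.mul_ne_top hA hB))
  rw [zero_mul] at htail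
  refine ETotallyBounded.of_approx hN fun ε hε => ?_
  have hε2 : ε / 2 ≠ 0 := (ENNReal.half_pos hε).ne'
  obtain ⟨I, hI⟩ := (htail.eventually_le_const (pos_iff_ne_zero.2 hε2)).exists
  set X := (∑ j ∈ I, ENNReal.ofReal (rbar ρ (2 ^ j))) * (A * B)
  have hX : X ≠ ∞ :=
    ENNReal.mul_ne_top (ENNReal.sum_ne_top.2 fun _ _ => ENNReal.ofReal_ne_top) (by finiteness)
  have hXL : X ≤ ENNReal.ofReal (X.toReal + 1) :=
    (ENNReal.le_ofReal_iff_toReal_le hX (by positivity)).2 (by linarith)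
  refine ⟨_, hhull.smul hN (X.toReal + 1), ?_⟩
  rintro _ ⟨x, hx, y, hy, rfl⟩
  obtain ⟨z, hz, hle⟩ := exists_mem_smul_convexHull_esumNorm_sub_le hρ.toIsClassB hp hq hr hpqr hT
    hM hx hy (by positivity) hXL hε2
  exact ⟨z, hz, hle.trans ((add_le_add_right hI _).trans_eq (ENNReal.add_halves ε))⟩

end Compactness

section Criterion

variable {G₀ G₁ V : Type*} [NormedAddCommGroup G₀] [NormedSpace ℝ G₀]
  [NormedAddCommGroup G₁] [NormedSpace ℝ G₁] [AddCommGroup V] [Module ℝ V]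
  {i₀ : G₀ →ₗ[ℝ] V} {i₁ : G₁ →ₗ[ℝ] V} {r : ℝ≥0∞}

lemma eLq_indicator_eKfun_sub_le (hr : 1 ≤ r) (ρ : ℝ → ℝ) (S : Set ℤ) (z c : V) :
    eLq r (S.indicator fun n => eKfun i₀ i₁ (2 ^ n) (z - c) / ENNReal.ofReal (ρ (2 ^ n))) ≤
      eLq r (S.indicator fun n => eKfun i₀ i₁ (2 ^ n) z / ENNReal.ofReal (ρ (2 ^ n))) +
        eLq r (S.indicator fun n => eKfun i₀ i₁ (2 ^ n) c / ENNReal.ofReal (ρ (2 ^ n))) := by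
  refine (eLq_mono r fun n => ?_).trans (eLq_add_le hr _ _)
  by_cases hn : n ∈ S
  · simp only [indicator_of_mem hn, ← ENNReal.add_div]
    gcongr
    exact (isESeminorm_eKfun i₀ i₁ (by positivity)).sub_le z c
  · simp [hn]

lemma eKNorm_le_mul_esumNorm_add (hr : 1 ≤ r) (ρ : ℝ → ℝ) (I : Finset ℤ) (z : V) :
    eKNorm i₀ i₁ ρ r z ≤
      (∑ n ∈ I, ENNReal.ofReal (max 1 (2 ^ n)) / ENNReal.ofReal (ρ (2 ^ n))) * esumNorm i₀ i₁ z +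
        eLq r ((I : Set ℤ)ᶜ.indicator
          fun n => eKfun i₀ i₁ (2 ^ n) z / ENNReal.ofReal (ρ (2 ^ n))) := by
  set κ := fun n : ℤ => eKfun i₀ i₁ (2 ^ n) z / ENNReal.ofReal (ρ (2 ^ n))
  calc eKNorm i₀ i₁ ρ r z
      = eLq r (fun n => (I : Set ℤ).indicator κ n + (I : Set ℤ)ᶜ.indicator κ n) :=
        congrArg (eLq r) (indicator_self_add_compl (I : Set ℤ) κ).symm
    _ ≤ (∑ n ∈ I, κ n) + eLq r ((I : Set ℤ)ᶜ.indicator κ) :=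
        (eLq_add_le hr _ _).trans (by gcongr; exact eLq_indicator_finset_le hr I κ)
    _ ≤ _ := by
        rw [Finset.sum_mul]
        gcongr with n
        rw [ENNReal.mul_div_right_comm.symm]
        exact ENNReal.div_le_div_right (eKfun_le_max_mul_esumNorm i₀ i₁ (by positivity) z) _

lemma ETotallyBounded.eKNorm_of_esumNorm {ρ : ℝ → ℝ} (hρ : ∀ t > 0, 0 < ρ t) (hr : 1 ≤ r)
    {S : Set V} (hS : ETotallyBounded (esumNorm i₀ i₁) S)
    (htail : ∀ ε : ℝ≥0∞, ε ≠ 0 → ∃ I : Finset ℤ, ∀ z ∈ S, eLq r ((I : Set ℤ)ᶜ.indicator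
      fun n => eKfun i₀ i₁ (2 ^ n) z / ENNReal.ofReal (ρ (2 ^ n))) ≤ ε) :
    ETotallyBounded (eKNorm i₀ i₁ ρ r) S := by
  intro ε hε
  have hε2 : ε / 2 ≠ 0 := (ENNReal.half_pos hε).ne'
  obtain ⟨I, hI⟩ := htail (ε / 2 / 2) (ENNReal.half_pos hε2).ne'
  set C := ∑ n ∈ I, ENNReal.ofReal (max 1 (2 ^ n)) / ENNReal.ofReal (ρ (2 ^ n))
  have hC : C ≠ ∞ := ENNReal.sum_ne_top.2 fun n _ =>
    ENNReal.div_ne_top ENNReal.ofReal_ne_top (ENNReal.ofReal_pos.2 (hρ _ (by positivity))).ne'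
  obtain ⟨D, hDS, hD⟩ := hS.exists_finset_subset (isESeminorm_esumNorm i₀ i₁)
    (ENNReal.div_ne_zero.2 ⟨hε2, hC⟩)
  refine ⟨D, fun z hz => ?_⟩
  obtain ⟨c, hcD, hzc⟩ := hD z hz
  refine ⟨c, hcD, ?_⟩
  calc eKNorm i₀ i₁ ρ r (z - c)
      ≤ C * (ε / 2 / C) + (ε / 2 / 2 + ε / 2 / 2) :=
        (eKNorm_le_mul_esumNorm_add hr ρ I (z - c)).trans <| add_le_add (by gcongr) <|
          (eLq_indicator_eKfun_sub_le hr ρ _ z c).trans (add_le_add (hI z hz) (hI c (hDS hcD)))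
    _ ≤ ε / 2 + ε / 2 := add_le_add ENNReal.mul_div_le (ENNReal.add_halves _).le
    _ = ε := ENNReal.add_halves ε

end Criterion

lemma exists_ne_zero_mul_le_of_tendsto_zero {f : ℝ≥0∞ → ℝ≥0∞} (hf : Tendsto f (𝓝 0) (𝓝 0))
    {C : ℝ≥0∞} (hC : C ≠ ∞) {ε : ℝ≥0∞} (hε : ε ≠ 0) : ∃ δ ≠ 0, f δ * C ≤ ε := by
  have h := ENNReal.Tendsto.mul_const hf (Or.inr hC)
  rw [zero_mul] at h
  obtain ⟨δ, hδ, hδ0⟩ := (((h.eventually_le_const (pos_iff_ne_zero.2 hε)).filter_mono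
    nhdsWithin_le_nhds).and (self_mem_nhdsWithin (s := Ioi 0))).exists
  exact ⟨δ, hδ0.ne', hδ⟩

section Interpolation

variable {E₀ E₁ F₀ F₁ G₀ G₁ VE VF VG : Type*}
  [NormedAddCommGroup E₀] [NormedSpace ℝ E₀] [NormedAddCommGroup E₁] [NormedSpace ℝ E₁]
  [NormedAddCommGroup F₀] [NormedSpace ℝ F₀] [NormedAddCommGroup F₁] [NormedSpace ℝ F₁]
  [NormedAddCommGroup G₀] [NormedSpace ℝ G₀] [NormedAddCommGroup G₁] [NormedSpace ℝ G₁]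
  [AddCommGroup VE] [Module ℝ VE] [AddCommGroup VF] [Module ℝ VF] [AddCommGroup VG] [Module ℝ VG]
  {iE₀ : E₀ →ₗ[ℝ] VE} {iE₁ : E₁ →ₗ[ℝ] VE} {iF₀ : F₀ →ₗ[ℝ] VF} {iF₁ : F₁ →ₗ[ℝ] VF}
  {iG₀ : G₀ →ₗ[ℝ] VG} {iG₁ : G₁ →ₗ[ℝ] VG} {T : VE →ₗ[ℝ] VF →ₗ[ℝ] VG}
  {ρ : ℝ → ℝ} {p q r M A B : ℝ≥0∞}

lemma exists_finset_eLq_indicator_compl_eKfun_bilinear_le (hρ : IsClassBpm ρ) (hp : 1 ≤ p)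
    (hq : 1 ≤ q) (hr : 1 ≤ r) (hpqr : 1 / r + 1 = 1 / p + 1 / q)
    (hT : eBilBdd (esumNorm iE₀ iE₁) (esumNorm iF₀ iF₁) (esumNorm iG₀ iG₁) fun x y => T x y)
    (hM : M ≠ ∞)
    (hbot : ∀ ε : ℝ≥0∞, ε ≠ 0 →
      ∀ᶠ n : ℤ in atBot, HasKBound iE₀ iE₁ iF₀ iF₁ iG₀ iG₁ T ε M (2 ^ n))
    (htop : ∀ ε : ℝ≥0∞, ε ≠ 0 →
      ∀ᶠ n : ℤ in atTop, HasKBound iE₀ iE₁ iF₀ iF₁ iG₀ iG₁ T M ε (2 ^ n))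
    (hA : A ≠ ∞) (hB : B ≠ ∞) {ε : ℝ≥0∞} (hε : ε ≠ 0) :
    ∃ I : Finset ℤ, ∀ x y, eJNorm iE₀ iE₁ (dualParam ρ) p x < A → eJNorm iF₀ iF₁ ρ q y < B →
      eLq r ((I : Set ℤ)ᶜ.indicator
        fun n => eKfun iG₀ iG₁ (2 ^ n) (T x y) / ENNReal.ofReal (ρ (2 ^ n))) ≤ ε := by
  have hε2 : ε / 2 ≠ 0 := (ENNReal.half_pos hε).ne'
  have hAB : A * B ≠ ∞ := ENNReal.mul_ne_top hA hB
  obtain ⟨δ₀, hδ₀, hle₀⟩ := exists_ne_zero_mul_le_of_tendsto_zero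
    (hρ.tendsto_tsum_dyadicKernel_left hM) hAB hε2
  obtain ⟨δ₁, hδ₁, hle₁⟩ := exists_ne_zero_mul_le_of_tendsto_zero
    (hρ.tendsto_tsum_dyadicKernel_right hM) hAB hε2
  obtain ⟨n₀, hn₀⟩ := eventually_atBot.1 (hbot δ₀ hδ₀)
  obtain ⟨n₁, hn₁⟩ := eventually_atTop.1 (htop δ₁ hδ₁)
  refine ⟨Finset.Ioo n₀ n₁, fun x y hx hy => ?_⟩
  set κ := fun n : ℤ => eKfun iG₀ iG₁ (2 ^ n) (T x y) / ENNReal.ofReal (ρ (2 ^ n))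
  have hsplit : ∀ n, (Finset.Ioo n₀ n₁ : Set ℤ)ᶜ.indicator κ n ≤
      (Iic n₀).indicator κ n + (Ici n₁).indicator κ n := fun n => by
    rw [show ((Finset.Ioo n₀ n₁ : Set ℤ)ᶜ) = Iic n₀ ∪ Ici n₁ by ext; simp; omega]
    exact (le_add_right le_rfl).trans_eq (indicator_union_add_inter_apply κ _ _ n)
  calc _ ≤ eLq r ((Iic n₀).indicator κ) + eLq r ((Ici n₁).indicator κ) :=
        (eLq_mono r hsplit).trans (eLq_add_le hr _ _)
    _ ≤ ε / 2 + ε / 2 := add_le_add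
        ((eLq_indicator_eKfun_bilinear_le hρ.toIsClassB hp hq hr hpqr hT hn₀ hx hy).trans hle₀)
        ((eLq_indicator_eKfun_bilinear_le hρ.toIsClassB hp hq hr hpqr hT hn₁ hx hy).trans hle₁)
    _ = ε := ENNReal.add_halves ε

lemma eKNorm_bilinear_ne_top (hρ : IsClassBpm ρ) (hp : 1 ≤ p) (hq : 1 ≤ q) (hr : 1 ≤ r)
    (hpqr : 1 / r + 1 = 1 / p + 1 / q)
    (hT : eBilBdd (esumNorm iE₀ iE₁) (esumNorm iF₀ iF₁) (esumNorm iG₀ iG₁) fun x y => T x y)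
    (hMtop : M ≠ ∞) (hM : ∀ t > 0, HasKBound iE₀ iE₁ iF₀ iF₁ iG₀ iG₁ T M M t) {x : VE} {y : VF}
    (hx : eJNorm iE₀ iE₁ (dualParam ρ) p x ≠ ∞) (hy : eJNorm iF₀ iF₁ ρ q y ≠ ∞) :
    eKNorm iG₀ iG₁ ρ r (T x y) ≠ ∞ := by
  have hle := eLq_indicator_eKfun_bilinear_le (S := univ) hρ.toIsClassB hp hq hr hpqr hT
    (fun n _ => hM (2 ^ n) (by positivity)) (ENNReal.lt_add_right hx one_ne_zero)
    (ENNReal.lt_add_right hy one_ne_zero)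
  rw [indicator_univ] at hle
  exact ne_top_of_le_ne_top (ENNReal.mul_ne_top (hρ.tsum_dyadicKernel_ne_top hMtop hMtop)
    (by finiteness)) hle

end Interpolation

theorem statement6_general
    {E₀ E₁ F₀ F₁ G₀ G₁ VE VF VG : Type*}
    [NormedAddCommGroup E₀] [NormedSpace ℝ E₀] [NormedAddCommGroup E₁] [NormedSpace ℝ E₁]
    [NormedAddCommGroup F₀] [NormedSpace ℝ F₀] [NormedAddCommGroup F₁] [NormedSpace ℝ F₁]
    [NormedAddCommGroup G₀] [NormedSpace ℝ G₀] [NormedAddCommGroup G₁] [NormedSpace ℝ G₁]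
    [AddCommGroup VE] [Module ℝ VE] [AddCommGroup VF] [Module ℝ VF] [AddCommGroup VG] [Module ℝ VG]
    {iE₀ : E₀ →ₗ[ℝ] VE} {iE₁ : E₁ →ₗ[ℝ] VE} {iF₀ : F₀ →ₗ[ℝ] VF} {iF₁ : F₁ →ₗ[ℝ] VF}
    {iG₀ : G₀ →ₗ[ℝ] VG} {iG₁ : G₁ →ₗ[ℝ] VG} {T : VE →ₗ[ℝ] VF →ₗ[ℝ] VG}
    (hT : eBilBdd (esumNorm iE₀ iE₁) (esumNorm iF₀ iF₁) (esumNorm iG₀ iG₁) fun x y => T x y)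
    (hb₀ : eBilBdd (enormOf iE₀) (enormOf iF₀) (enormOf iG₀) fun x y => T x y)
    (hb₁ : eBilBdd (enormOf iE₁) (enormOf iF₁) (enormOf iG₁) fun x y => T x y)
    (hc₀ : eBilCompact (enormOf iE₀) (enormOf iF₀) (enormOf iG₀) fun x y => T x y)
    (hc₁ : eBilCompact (enormOf iE₁) (enormOf iF₁) (enormOf iG₁) fun x y => T x y)
    {ρ : ℝ → ℝ} (hρ : IsClassBpm ρ) {p q r : ℝ≥0∞} (hp : 1 ≤ p) (hq : 1 ≤ q) (hr : 1 ≤ r)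
    (hpqr : 1 / r + 1 = 1 / p + 1 / q) :
    (∀ x y, eJNorm iE₀ iE₁ (dualParam ρ) p x ≠ ∞ → eJNorm iF₀ iF₁ ρ q y ≠ ∞ →
      eJNorm iG₀ iG₁ ρ r (T x y) ≠ ∞) ∧
    eBilCompact (eJNorm iE₀ iE₁ (dualParam ρ) p) (eJNorm iF₀ iF₁ ρ q)
      (eJNorm iG₀ iG₁ ρ r) fun x y => T x y := by
  obtain ⟨M, hMtop, hM⟩ := exists_hasKBound hb₀ hb₁
  have hJK := eJNorm_le_mul_eKNorm (i₀ := iG₀) (i₁ := iG₁) hρ hr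
  have hCtop : 1 + 2 * ENNReal.ofReal (rbar ρ 2⁻¹) ≠ ∞ := by finiteness
  refine ⟨fun x y hx hy => ne_top_of_le_ne_top (ENNReal.mul_ne_top hCtop ?_) (hJK _), ?_⟩
  · exact eKNorm_bilinear_ne_top hρ hp hq hr hpqr hT hMtop hM hx hy
  have hsum := eTotallyBounded_esumNorm_image2 (A := 2) (B := 2) hρ hp hq hr hpqr hT hMtop
    (hM 1 one_pos) hb₀ hc₀ ENNReal.ofNat_ne_top ENNReal.ofNat_ne_top
  have hK : ETotallyBounded (eKNorm iG₀ iG₁ ρ r) _ :=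
    hsum.eKNorm_of_esumNorm hρ.pos hr fun ε hε => by
      obtain ⟨I, hI⟩ := exists_finset_eLq_indicator_compl_eKfun_bilinear_le (A := 2) (B := 2)
        hρ hp hq hr hpqr hT hMtop
        (fun ε hε => eventually_hasKBound_atBot hc₀ hb₁ hM hε)
        (fun ε hε => eventually_hasKBound_atTop hb₀ hc₁ hM hε)
        ENNReal.ofNat_ne_top ENNReal.ofNat_ne_top hε
      exact ⟨I, forall_mem_image2.2 fun x hx y hy => hI x y hx hy⟩
  exact eBilCompact_iff.2 <| (hK.of_le_mul hCtop hJK).mono <| image2_subset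
    (fun x hx => lt_of_le_of_lt hx ENNReal.one_lt_two)
    fun y hy => lt_of_le_of_lt hy ENNReal.one_lt_two

/-- Hayakawa-type theorem: if the restrictions of `T` to `E_k × F_k`
are compact into `G_k` (`k = 0,1`), then `T` is compact from
`(E₀,E₁)_{γ,p;J} × (F₀,F₁)_{ρ,q;J}` into `(G₀,G₁)_{ρ,r;J}`, for `ρ ∈ ℬ^{+-}`,
`γ(t) = 1/ρ̄(t⁻¹)` and `1/r = 1/p + 1/q - 1`. -/
theorem statement6
    {E₀ E₁ F₀ F₁ G₀ G₁ VE VF VG : Type*}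
    [NormedAddCommGroup E₀] [NormedSpace ℝ E₀] [NormedAddCommGroup E₁] [NormedSpace ℝ E₁]
    [NormedAddCommGroup F₀] [NormedSpace ℝ F₀] [NormedAddCommGroup F₁] [NormedSpace ℝ F₁]
    [NormedAddCommGroup G₀] [NormedSpace ℝ G₀] [NormedAddCommGroup G₁] [NormedSpace ℝ G₁]
    [AddCommGroup VE] [Module ℝ VE] [TopologicalSpace VE]
    [AddCommGroup VF] [Module ℝ VF] [TopologicalSpace VF]
    [AddCommGroup VG] [Module ℝ VG] [TopologicalSpace VG]
    (iE₀ : E₀ →ₗ[ℝ] VE) (iE₁ : E₁ →ₗ[ℝ] VE) (hE : IsBanachCouple iE₀ iE₁)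
    (iF₀ : F₀ →ₗ[ℝ] VF) (iF₁ : F₁ →ₗ[ℝ] VF) (hF : IsBanachCouple iF₀ iF₁)
    (iG₀ : G₀ →ₗ[ℝ] VG) (iG₁ : G₁ →ₗ[ℝ] VG) (hG : IsBanachCouple iG₀ iG₁)
    (T : VE →ₗ[ℝ] VF →ₗ[ℝ] VG)
    (hbdd : eBilBdd (esumNorm iE₀ iE₁) (esumNorm iF₀ iF₁) (esumNorm iG₀ iG₁)
      (fun x y => T x y))
    (hb0 : eBilBdd (enormOf iE₀) (enormOf iF₀) (enormOf iG₀) (fun x y => T x y))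
    (hb1 : eBilBdd (enormOf iE₁) (enormOf iF₁) (enormOf iG₁) (fun x y => T x y))
    (hc0 : eBilCompact (enormOf iE₀) (enormOf iF₀) (enormOf iG₀) (fun x y => T x y))
    (hc1 : eBilCompact (enormOf iE₁) (enormOf iF₁) (enormOf iG₁) (fun x y => T x y))
    (ρ : ℝ → ℝ) (hρ : IsClassBpm ρ)
    (p q r : ℝ≥0∞) (hp : 1 ≤ p) (hq : 1 ≤ q) (hr : 1 ≤ r)
    (hpqr : 1 / r + 1 = 1 / p + 1 / q) :
    (∀ x y, eJNorm iE₀ iE₁ (fun t => (rbar ρ t⁻¹)⁻¹) p x ≠ ∞ → eJNorm iF₀ iF₁ ρ q y ≠ ∞ →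
      eJNorm iG₀ iG₁ ρ r (T x y) ≠ ∞) ∧
    eBilCompact (eJNorm iE₀ iE₁ (fun t => (rbar ρ t⁻¹)⁻¹) p) (eJNorm iF₀ iF₁ ρ q)
      (eJNorm iG₀ iG₁ ρ r) (fun x y => T x y) :=
  statement6_general hbdd hb0 hb1 hc0 hc1 hρ hp hq hr hpqr
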